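/- arXiv:1811.07735 — 3 statements merged into one kernel-verified Lean document; each statement's English description precedes it below -/
import Mathlib

section
/- Let ω = A(x,y)dx + B(x,y)dy define a convex homogeneous foliation of degree 4 on ℙ²(ℂ), i.e. A, B ∈ ℂ[x,y] are homogeneous of degree 4 without common factor and every linear factor of D_ω = (∂A/∂x)(∂B/∂y) − (∂A/∂y)(∂B/∂x) divides C_ω = xA + yB. Then ω is linearly conjugate to one of the five 1-forms: ω₁ = y⁴dx − x⁴dy; ω₂ = y³(2x−y)dx + x³(x−2y)dy; ω₃ = y²(6x²+4xy+y²)dx − x³(x+4y)dy; ω₄ = y³(4x+y)dx + x³(x+4y)dy; ω₅ = y²(6x²+4xy+y²)dx + 3x⁴dy. -/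
open MvPolynomial

noncomputable section

/-- Polynomials in two variables `x = X 0`, `y = X 1` over `ℂ`. -/
abbrev P2 : Type := MvPolynomial (Fin 2) ℂ

/-- The inflection polynomial `D_ω = A_x B_y - A_y B_x` of `ω = A dx + B dy`. -/
def Dpoly (A B : P2) : P2 :=
  pderiv 0 A * pderiv 1 B - pderiv 1 A * pderiv 0 B

/-- The tangent cone `C_ω = xA + yB` of `ω = A dx + B dy`. -/
def Cpoly (A B : P2) : P2 := X 0 * A + X 1 * B

/-- `A` and `B` have no common (non-unit) factor. -/
def NoCommonFactor (A B : P2) : Prop := ∀ p : P2, p ∣ A → p ∣ B → IsUnit p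

/-- Convexity: every linear factor of `D_ω` divides `C_ω`. -/
def IsConvexPair (A B : P2) : Prop :=
  ∀ l : P2, l.IsHomogeneous 1 → l ≠ 0 → l ∣ Dpoly A B → l ∣ Cpoly A B

/-- Composition of a polynomial with the linear map `φ(x,y) = (a₁x + a₂y, a₃x + a₄y)`. -/
def comp2 (a₁ a₂ a₃ a₄ : ℂ) (p : P2) : P2 :=
  aeval ![C a₁ * X 0 + C a₂ * X 1, C a₃ * X 0 + C a₄ * X 1] p

/-- `ω = A dx + B dy` is linearly conjugate to `ω' = A' dx + B' dy`:
`φ*ω = λ ω'` for some `φ ∈ GL₂(ℂ)` and `λ ∈ ℂ \ {0}`. -/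
def LinConj (A B A' B' : P2) : Prop :=
  ∃ a₁ a₂ a₃ a₄ lam : ℂ, a₁ * a₄ - a₂ * a₃ ≠ 0 ∧ lam ≠ 0 ∧
    C a₁ * comp2 a₁ a₂ a₃ a₄ A + C a₃ * comp2 a₁ a₂ a₃ a₄ B = C lam * A' ∧
    C a₂ * comp2 a₁ a₂ a₃ a₄ A + C a₄ * comp2 a₁ a₂ a₃ a₄ B = C lam * B'

/-- ω₁ = y⁴dx − x⁴dy -/
def A1 : P2 := X 1 ^ 4
def B1 : P2 := -X 0 ^ 4
/-- ω₂ = y³(2x−y)dx + x³(x−2y)dy -/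
def A2 : P2 := X 1 ^ 3 * (2 * X 0 - X 1)
def B2 : P2 := X 0 ^ 3 * (X 0 - 2 * X 1)
/-- ω₃ = y²(6x²+4xy+y²)dx − x³(x+4y)dy -/
def A3 : P2 := X 1 ^ 2 * (6 * X 0 ^ 2 + 4 * X 0 * X 1 + X 1 ^ 2)
def B3 : P2 := -(X 0 ^ 3 * (X 0 + 4 * X 1))
/-- ω₄ = y³(4x+y)dx + x³(x+4y)dy -/
def A4 : P2 := X 1 ^ 3 * (4 * X 0 + X 1)
def B4 : P2 := X 0 ^ 3 * (X 0 + 4 * X 1)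
/-- ω₅ = y²(6x²+4xy+y²)dx + 3x⁴dy -/
def A5 : P2 := X 1 ^ 2 * (6 * X 0 ^ 2 + 4 * X 0 * X 1 + X 1 ^ 2)
def B5 : P2 := 3 * X 0 ^ 4

/-- The binary quartic with coefficients `a_i` in front of `x^(4-i) y^i`. -/
def quart (a0 a1 a2 a3 a4 : ℂ) : P2 :=
  C a0 * X 0 ^ 4 + C a1 * X 0 ^ 3 * X 1 + C a2 * X 0 ^ 2 * X 1 ^ 2 + C a3 * X 0 * X 1 ^ 3
    + C a4 * X 1 ^ 4

lemma eval_quart (a0 a1 a2 a3 a4 u v : ℂ) :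
    eval ![u, v] (quart a0 a1 a2 a3 a4) =
      a0 * u ^ 4 + a1 * u ^ 3 * v + a2 * u ^ 2 * v ^ 2 + a3 * u * v ^ 3 + a4 * v ^ 4 := by
  simp [quart]

lemma p2_ext {P Q : P2} (h : ∀ u v : ℂ, eval ![u, v] P = eval ![u, v] Q) : P = Q := by
  apply MvPolynomial.funext
  intro x
  have : x = ![x 0, x 1] := by
    ext i; fin_cases i <;> rfl
  rw [this]; exact h _ _

lemma exists_quart {A : P2} (hA : A.IsHomogeneous 4) :
    ∃ a0 a1 a2 a3 a4 : ℂ, A = quart a0 a1 a2 a3 a4 := by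
  let m : ℕ → (Fin 2 →₀ ℕ) := fun i => Finsupp.single 0 (4 - i) + Finsupp.single 1 i
  refine ⟨coeff (m 0) A, coeff (m 1) A, coeff (m 2) A, coeff (m 3) A, coeff (m 4) A, ?_⟩
  apply p2_ext
  intro u v
  rw [eval_quart, eval_eq']
  have hsub : A.support ⊆ (Finset.range 5).image m := by
    intro d hd
    have h1 := hA.degree_eq_sum_deg_support hd
    change 4 = Finsupp.degree d at h1
    rw [Finsupp.degree_eq_sum, Fin.sum_univ_two] at h1
    rw [Finset.mem_image]
    refine ⟨d 1, by rw [Finset.mem_range]; omega, ?_⟩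
    ext i
    fin_cases i
    · simp [m]; omega
    · simp [m]
  rw [Finset.sum_subset hsub, Finset.sum_image]
  · simp [Finset.sum_range_succ, m]
    ring
  · intro i hi j hj hij
    have := DFunLike.congr_fun hij 1
    simpa [m] using this
  · intro d _ hd
    rw [notMem_support_iff.mp hd, zero_mul]

lemma aeval_smul_of_homogeneous {R : Type*} [CommRing R] [Algebra ℂ R] {P : P2} {n : ℕ}
    (hP : P.IsHomogeneous n) (z : R) (c : Fin 2 → ℂ) :
    aeval (fun i => z * algebraMap ℂ R (c i)) P = z ^ n * algebraMap ℂ R (eval c P) := by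
  rw [aeval_def, eval₂_eq', eval_eq', map_sum, Finset.mul_sum]
  apply Finset.sum_congr rfl
  intro d hd
  have h1 := hP.degree_eq_sum_deg_support hd
  change n = Finsupp.degree d at h1
  rw [Finsupp.degree_eq_sum, Fin.sum_univ_two] at h1
  simp only [Fin.prod_univ_two, map_mul, map_pow]
  rw [h1]
  ring

lemma lin_dvd_of_eval {P : P2} {n : ℕ} (hP : P.IsHomogeneous n) {u v : ℂ}
    (huv : u ≠ 0 ∨ v ≠ 0) (h : eval ![u, v] P = 0) : (C v * X 0 - C u * X 1) ∣ P := by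
  set l : P2 := C v * X 0 - C u * X 1 with hl
  rw [← Ideal.mem_span_singleton, ← Ideal.Quotient.eq_zero_iff_mem]
  have key : (Ideal.Quotient.mk (Ideal.span {l})) P =
      aeval (fun i => Ideal.Quotient.mk (Ideal.span {l}) (X i)) P := by
    have : Ideal.Quotient.mkₐ ℂ (Ideal.span {l}) =
      aeval (fun i => Ideal.Quotient.mk (Ideal.span {l}) (X i)) := by
      apply MvPolynomial.algHom_ext
      intro i; simp
    exact DFunLike.congr_fun this P
  have hl0 : Ideal.Quotient.mk (Ideal.span {l}) (C v * X 0) =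
      Ideal.Quotient.mk (Ideal.span {l}) (C u * X 1) := by
    rw [Ideal.Quotient.eq]; exact Ideal.mem_span_singleton_self l
  rw [key]
  have hz : ∃ z : P2 ⧸ Ideal.span {l},
      (fun i => Ideal.Quotient.mk (Ideal.span {l}) (X i)) =
        fun i => z * algebraMap ℂ _ (![u, v] i) := by
    rcases huv with hu | hv
    · refine ⟨Ideal.Quotient.mk _ (C u⁻¹ * X 0), ?_⟩
      ext i
      fin_cases i
      · change _ = Ideal.Quotient.mk _ (C u⁻¹ * X 0) * Ideal.Quotient.mk _ (C u)
        rw [← map_mul]; congr 1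
        change X 0 = _
        rw [mul_right_comm, ← C_mul, inv_mul_cancel₀ hu]; simp
      · change _ = Ideal.Quotient.mk _ (C u⁻¹ * X 0) * Ideal.Quotient.mk _ (C v)
        rw [← map_mul]
        rw [show C u⁻¹ * X 0 * C v = C u⁻¹ * (C v * X 0 : P2) by ring, map_mul, hl0, ← map_mul,
          ← mul_assoc, ← C_mul, inv_mul_cancel₀ hu]
        simp
    · refine ⟨Ideal.Quotient.mk _ (C v⁻¹ * X 1), ?_⟩
      ext i
      fin_cases i
      · change _ = Ideal.Quotient.mk _ (C v⁻¹ * X 1) * Ideal.Quotient.mk _ (C u)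
        rw [← map_mul]
        rw [show C v⁻¹ * X 1 * C u = C v⁻¹ * (C u * X 1 : P2) by ring, map_mul, ← hl0, ← map_mul,
          ← mul_assoc, ← C_mul, inv_mul_cancel₀ hv]
        simp
      · change _ = Ideal.Quotient.mk _ (C v⁻¹ * X 1) * Ideal.Quotient.mk _ (C v)
        rw [← map_mul]; congr 1
        change X 1 = _
        rw [mul_right_comm, ← C_mul, inv_mul_cancel₀ hv]; simp
  obtain ⟨z, hz⟩ := hz
  rw [hz, aeval_smul_of_homogeneous hP, h, map_zero, mul_zero]

/-- The pointwise form of the hypotheses. -/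
structure Hyp (A B : P2) : Prop where
  hA : A.IsHomogeneous 4
  hB : B.IsHomogeneous 4
  N : ∀ u v : ℂ, (u ≠ 0 ∨ v ≠ 0) → eval ![u, v] A = 0 → eval ![u, v] B = 0 → False
  K : ∀ u v : ℂ, (u ≠ 0 ∨ v ≠ 0) → eval ![u, v] (Dpoly A B) = 0 → eval ![u, v] (Cpoly A B) = 0

lemma lin_homog (u v : ℂ) : (C v * X 0 - C u * X 1 : P2).IsHomogeneous 1 :=
  (isHomogeneous_C_mul_X _ _).sub (isHomogeneous_C_mul_X _ _)

lemma lin_eval (u v s t : ℂ) : eval ![s, t] (C v * X 0 - C u * X 1 : P2) = v * s - u * t := by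
  simp

lemma lin_ne (u v : ℂ) (huv : u ≠ 0 ∨ v ≠ 0) : (C v * X 0 - C u * X 1 : P2) ≠ 0 := by
  intro h
  have h1 := lin_eval u v 1 0
  have h2 := lin_eval u v 0 1
  rw [h] at h1 h2
  simp at h1 h2
  rcases huv with h | h
  · exact h h2
  · exact h h1.symm

lemma hyp_of {A B : P2} (hA : A.IsHomogeneous 4) (hB : B.IsHomogeneous 4)
    (hcop : NoCommonFactor A B) (hconv : IsConvexPair A B) : Hyp A B := by
  refine ⟨hA, hB, ?_, ?_⟩
  · intro u v huv h1 h2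
    have hu := hcop _ (lin_dvd_of_eval hA huv h1) (lin_dvd_of_eval hB huv h2)
    have := hu.map (eval ![u, v])
    rw [lin_eval] at this
    apply this.ne_zero
    ring
  · intro u v huv h
    have hD : (Dpoly A B).IsHomogeneous 6 :=
      (hA.pderiv.mul hB.pderiv).sub (hA.pderiv.mul hB.pderiv)
    obtain ⟨q, hq⟩ := hconv _ (lin_homog u v) (lin_ne u v huv) (lin_dvd_of_eval hD huv h)
    rw [hq, map_mul, lin_eval]
    ring

lemma eval_comp2 (a1 a2 a3 a4 u v : ℂ) (P : P2) :
    eval ![u, v] (comp2 a1 a2 a3 a4 P) = eval ![a1 * u + a2 * v, a3 * u + a4 * v] P := by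
  have : (aeval ![u, v]).comp
      (aeval ![C a1 * X 0 + C a2 * X 1, C a3 * X 0 + C a4 * X 1] : P2 →ₐ[ℂ] P2) =
      aeval ![a1 * u + a2 * v, a3 * u + a4 * v] := by
    apply MvPolynomial.algHom_ext
    intro i
    fin_cases i <;> simp
  have h := DFunLike.congr_fun this P
  simpa [comp2, aeval_eq_eval] using h

lemma comp2_homog (a1 a2 a3 a4 : ℂ) {P : P2} {n : ℕ} (h : P.IsHomogeneous n) :
    (comp2 a1 a2 a3 a4 P).IsHomogeneous n := by
  have := h.aeval (τ := Fin 2) (S := ℂ) (n := 1)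
    ![C a1 * X 0 + C a2 * X 1, C a3 * X 0 + C a4 * X 1] (by
      intro i
      fin_cases i
      · exact (isHomogeneous_C_mul_X _ _).add (isHomogeneous_C_mul_X _ _)
      · exact (isHomogeneous_C_mul_X _ _).add (isHomogeneous_C_mul_X _ _))
  rw [one_mul] at this
  exact this

lemma pderiv0_comp2 (a1 a2 a3 a4 : ℂ) (P : P2) :
    pderiv 0 (comp2 a1 a2 a3 a4 P) =
      C a1 * comp2 a1 a2 a3 a4 (pderiv 0 P) + C a3 * comp2 a1 a2 a3 a4 (pderiv 1 P) := by
  induction P using MvPolynomial.induction_on with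
  | C a => simp [comp2]
  | add p q hp hq =>
    simp only [comp2, map_add] at *
    rw [hp, hq]; ring
  | mul_X p i hp =>
    simp only [comp2, map_mul, pderiv_mul, map_add] at *
    rw [hp]
    fin_cases i
    · simp [pderiv_X]; ring
    · simp [pderiv_X]; ring

lemma pderiv1_comp2 (a1 a2 a3 a4 : ℂ) (P : P2) :
    pderiv 1 (comp2 a1 a2 a3 a4 P) =
      C a2 * comp2 a1 a2 a3 a4 (pderiv 0 P) + C a4 * comp2 a1 a2 a3 a4 (pderiv 1 P) := by
  induction P using MvPolynomial.induction_on with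
  | C a => simp [comp2]
  | add p q hp hq =>
    simp only [comp2, map_add] at *
    rw [hp, hq]; ring
  | mul_X p i hp =>
    simp only [comp2, map_mul, pderiv_mul, map_add] at *
    rw [hp]
    fin_cases i
    · simp [pderiv_X]; ring
    · simp [pderiv_X]; ring

def pullA (a1 a2 a3 a4 : ℂ) (A B : P2) : P2 :=
  C a1 * comp2 a1 a2 a3 a4 A + C a3 * comp2 a1 a2 a3 a4 B
def pullB (a1 a2 a3 a4 : ℂ) (A B : P2) : P2 :=
  C a2 * comp2 a1 a2 a3 a4 A + C a4 * comp2 a1 a2 a3 a4 B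

lemma eval_pullA (a1 a2 a3 a4 u v : ℂ) (A B : P2) :
    eval ![u, v] (pullA a1 a2 a3 a4 A B) =
      a1 * eval ![a1 * u + a2 * v, a3 * u + a4 * v] A +
      a3 * eval ![a1 * u + a2 * v, a3 * u + a4 * v] B := by
  simp [pullA, eval_comp2]

lemma eval_pullB (a1 a2 a3 a4 u v : ℂ) (A B : P2) :
    eval ![u, v] (pullB a1 a2 a3 a4 A B) =
      a2 * eval ![a1 * u + a2 * v, a3 * u + a4 * v] A +
      a4 * eval ![a1 * u + a2 * v, a3 * u + a4 * v] B := by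
  simp [pullB, eval_comp2]

lemma eval_D_pull (a1 a2 a3 a4 u v : ℂ) (A B : P2) :
    eval ![u, v] (Dpoly (pullA a1 a2 a3 a4 A B) (pullB a1 a2 a3 a4 A B)) =
      (a1 * a4 - a2 * a3) ^ 2 *
        eval ![a1 * u + a2 * v, a3 * u + a4 * v] (Dpoly A B) := by
  simp only [Dpoly, pullA, pullB, map_add, pderiv_C_mul, pderiv0_comp2, pderiv1_comp2, map_sub,
    map_mul, eval_comp2, eval_C]
  ring

lemma eval_C_pull (a1 a2 a3 a4 u v : ℂ) (A B : P2) :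
    eval ![u, v] (Cpoly (pullA a1 a2 a3 a4 A B) (pullB a1 a2 a3 a4 A B)) =
        eval ![a1 * u + a2 * v, a3 * u + a4 * v] (Cpoly A B) := by
  simp only [Cpoly, map_add, map_mul, eval_pullA, eval_pullB, eval_X]
  simp only [Matrix.cons_val_zero, Matrix.cons_val_one]
  ring

lemma lin_nonzero {a1 a2 a3 a4 u v : ℂ} (hd : a1 * a4 - a2 * a3 ≠ 0) (huv : u ≠ 0 ∨ v ≠ 0) :
    a1 * u + a2 * v ≠ 0 ∨ a3 * u + a4 * v ≠ 0 := by
  by_contra! h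
  obtain ⟨h1, h2⟩ := h
  rcases huv with hu | hv
  · apply mul_ne_zero hd hu
    linear_combination a4 * h1 - a2 * h2
  · apply mul_ne_zero hd hv
    linear_combination a1 * h2 - a3 * h1

lemma hyp_pull {a1 a2 a3 a4 : ℂ} (hd : a1 * a4 - a2 * a3 ≠ 0) {A B : P2} (H : Hyp A B) :
    Hyp (pullA a1 a2 a3 a4 A B) (pullB a1 a2 a3 a4 A B) := by
  refine ⟨((comp2_homog _ _ _ _ H.hA).C_mul _).add ((comp2_homog _ _ _ _ H.hB).C_mul _),
    ((comp2_homog _ _ _ _ H.hA).C_mul _).add ((comp2_homog _ _ _ _ H.hB).C_mul _), ?_, ?_⟩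
  · intro u v huv h1 h2
    rw [eval_pullA] at h1
    rw [eval_pullB] at h2
    refine H.N _ _ (lin_nonzero hd huv) ?_ ?_
    · apply (mul_eq_zero.mp (_ : (a1 * a4 - a2 * a3) * _ = 0)).resolve_left hd
      linear_combination a4 * h1 - a3 * h2
    · apply (mul_eq_zero.mp (_ : (a1 * a4 - a2 * a3) * _ = 0)).resolve_left hd
      linear_combination a1 * h2 - a2 * h1
  · intro u v huv h
    rw [eval_D_pull] at h
    rw [eval_C_pull]
    exact H.K _ _ (lin_nonzero hd huv) ((mul_eq_zero.mp h).resolve_left (pow_ne_zero 2 hd))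

lemma linConj_pull {a1 a2 a3 a4 : ℂ} (hd : a1 * a4 - a2 * a3 ≠ 0) {A B A' B' : P2}
    (h : LinConj (pullA a1 a2 a3 a4 A B) (pullB a1 a2 a3 a4 A B) A' B') : LinConj A B A' B' := by
  obtain ⟨c1, c2, c3, c4, lam, hc, hl, h1, h2⟩ := h
  refine ⟨a1 * c1 + a2 * c3, a1 * c2 + a2 * c4, a3 * c1 + a4 * c3, a3 * c2 + a4 * c4, lam,
    ?_, hl, ?_, ?_⟩
  · have := mul_ne_zero hd hc
    intro h0; apply this; linear_combination h0
  · rw [← h1]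
    apply p2_ext; intro u v
    simp only [map_add, map_mul, eval_C, eval_comp2, eval_pullA, eval_pullB]
    rw [show (a1 * c1 + a2 * c3) * u + (a1 * c2 + a2 * c4) * v =
      a1 * (c1 * u + c2 * v) + a2 * (c3 * u + c4 * v) by ring,
      show (a3 * c1 + a4 * c3) * u + (a3 * c2 + a4 * c4) * v =
      a3 * (c1 * u + c2 * v) + a4 * (c3 * u + c4 * v) by ring]
    ring
  · rw [← h2]
    apply p2_ext; intro u v
    simp only [map_add, map_mul, eval_C, eval_comp2, eval_pullA, eval_pullB]
    rw [show (a1 * c1 + a2 * c3) * u + (a1 * c2 + a2 * c4) * v =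
      a1 * (c1 * u + c2 * v) + a2 * (c3 * u + c4 * v) by ring,
      show (a3 * c1 + a4 * c3) * u + (a3 * c2 + a4 * c4) * v =
      a3 * (c1 * u + c2 * v) + a4 * (c3 * u + c4 * v) by ring]
    ring

/-- The conclusion of the classification. -/
def Concl (A B : P2) : Prop :=
  LinConj A B A1 B1 ∨ LinConj A B A2 B2 ∨ LinConj A B A3 B3 ∨
      LinConj A B A4 B4 ∨ LinConj A B A5 B5

lemma concl_pull {a1 a2 a3 a4 : ℂ} (hd : a1 * a4 - a2 * a3 ≠ 0) {A B : P2}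
    (h : Concl (pullA a1 a2 a3 a4 A B) (pullB a1 a2 a3 a4 A B)) : Concl A B := by
  rcases h with h | h | h | h | h
  · exact Or.inl (linConj_pull hd h)
  · exact Or.inr (Or.inl (linConj_pull hd h))
  · exact Or.inr (Or.inr (Or.inl (linConj_pull hd h)))
  · exact Or.inr (Or.inr (Or.inr (Or.inl (linConj_pull hd h))))
  · exact Or.inr (Or.inr (Or.inr (Or.inr (linConj_pull hd h))))

/-- Numerical value of `D` for a pair of quartics. -/
def dval (a0 a1 a2 a3 a4 b0 b1 b2 b3 b4 u v : ℂ) : ℂ :=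
  (4 * a0 * u ^ 3 + 3 * a1 * u ^ 2 * v + 2 * a2 * u * v ^ 2 + a3 * v ^ 3) *
    (b1 * u ^ 3 + 2 * b2 * u ^ 2 * v + 3 * b3 * u * v ^ 2 + 4 * b4 * v ^ 3) -
  (a1 * u ^ 3 + 2 * a2 * u ^ 2 * v + 3 * a3 * u * v ^ 2 + 4 * a4 * v ^ 3) *
    (4 * b0 * u ^ 3 + 3 * b1 * u ^ 2 * v + 2 * b2 * u * v ^ 2 + b3 * v ^ 3)

lemma eval_D_quart (a0 a1 a2 a3 a4 b0 b1 b2 b3 b4 u v : ℂ) :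
    eval ![u, v] (Dpoly (quart a0 a1 a2 a3 a4) (quart b0 b1 b2 b3 b4)) =
      dval a0 a1 a2 a3 a4 b0 b1 b2 b3 b4 u v := by
  simp [Dpoly, quart, pderiv_X, dval]
  ring

lemma eval_C_quart (a0 a1 a2 a3 a4 b0 b1 b2 b3 b4 u v : ℂ) :
    eval ![u, v] (Cpoly (quart a0 a1 a2 a3 a4) (quart b0 b1 b2 b3 b4)) =
      u * (a0 * u ^ 4 + a1 * u ^ 3 * v + a2 * u ^ 2 * v ^ 2 + a3 * u * v ^ 3 + a4 * v ^ 4) +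
      v * (b0 * u ^ 4 + b1 * u ^ 3 * v + b2 * u ^ 2 * v ^ 2 + b3 * u * v ^ 3 + b4 * v ^ 4) := by
  simp [Cpoly, eval_quart]

lemma hypN {a0 a1 a2 a3 a4 b0 b1 b2 b3 b4 : ℂ}
    (H : Hyp (quart a0 a1 a2 a3 a4) (quart b0 b1 b2 b3 b4)) (u v : ℂ) (huv : u ≠ 0 ∨ v ≠ 0)
    (h1 : a0 * u ^ 4 + a1 * u ^ 3 * v + a2 * u ^ 2 * v ^ 2 + a3 * u * v ^ 3 + a4 * v ^ 4 = 0)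
    (h2 : b0 * u ^ 4 + b1 * u ^ 3 * v + b2 * u ^ 2 * v ^ 2 + b3 * u * v ^ 3 + b4 * v ^ 4 = 0) :
    False :=
  H.N u v huv (by rw [eval_quart]; exact h1) (by rw [eval_quart]; exact h2)

lemma hypK {a0 a1 a2 a3 a4 b0 b1 b2 b3 b4 : ℂ}
    (H : Hyp (quart a0 a1 a2 a3 a4) (quart b0 b1 b2 b3 b4)) (u v : ℂ) (huv : u ≠ 0 ∨ v ≠ 0)
    (h : dval a0 a1 a2 a3 a4 b0 b1 b2 b3 b4 u v = 0) :
    u * (a0 * u ^ 4 + a1 * u ^ 3 * v + a2 * u ^ 2 * v ^ 2 + a3 * u * v ^ 3 + a4 * v ^ 4) +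
      v * (b0 * u ^ 4 + b1 * u ^ 3 * v + b2 * u ^ 2 * v ^ 2 + b3 * u * v ^ 3 + b4 * v ^ 4) = 0 := by
  rw [← eval_C_quart]
  exact H.K u v huv (by rw [eval_D_quart]; exact h)

/-- The univariate polynomial `D(1,t)`. -/
def dpol (a0 a1 a2 a3 a4 b0 b1 b2 b3 b4 : ℂ) : Polynomial ℂ :=
  (Polynomial.C (4 * a0) + Polynomial.C (3 * a1) * Polynomial.X
    + Polynomial.C (2 * a2) * Polynomial.X ^ 2 + Polynomial.C a3 * Polynomial.X ^ 3) *
  (Polynomial.C b1 + Polynomial.C (2 * b2) * Polynomial.X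
    + Polynomial.C (3 * b3) * Polynomial.X ^ 2 + Polynomial.C (4 * b4) * Polynomial.X ^ 3) -
  (Polynomial.C a1 + Polynomial.C (2 * a2) * Polynomial.X
    + Polynomial.C (3 * a3) * Polynomial.X ^ 2 + Polynomial.C (4 * a4) * Polynomial.X ^ 3) *
  (Polynomial.C (4 * b0) + Polynomial.C (3 * b1) * Polynomial.X
    + Polynomial.C (2 * b2) * Polynomial.X ^ 2 + Polynomial.C b3 * Polynomial.X ^ 3)

lemma dpol_eval (a0 a1 a2 a3 a4 b0 b1 b2 b3 b4 t : ℂ) :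
    (dpol a0 a1 a2 a3 a4 b0 b1 b2 b3 b4).eval t =
      dval a0 a1 a2 a3 a4 b0 b1 b2 b3 b4 1 t := by
  simp [dpol, dval]

lemma pull_shear (a0 a1 a2 a3 a4 b0 b1 b2 b3 b4 r : ℂ) :
    pullA 1 0 r 1 (quart a0 a1 a2 a3 a4) (quart b0 b1 b2 b3 b4) =
      quart (a0 + a1 * r + a2 * r ^ 2 + a3 * r ^ 3 + a4 * r ^ 4
          + r * (b0 + b1 * r + b2 * r ^ 2 + b3 * r ^ 3 + b4 * r ^ 4))
        (a1 + 2 * a2 * r + 3 * a3 * r ^ 2 + 4 * a4 * r ^ 3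
          + r * (b1 + 2 * b2 * r + 3 * b3 * r ^ 2 + 4 * b4 * r ^ 3))
        (a2 + 3 * a3 * r + 6 * a4 * r ^ 2 + r * (b2 + 3 * b3 * r + 6 * b4 * r ^ 2))
        (a3 + 4 * a4 * r + r * (b3 + 4 * b4 * r)) (a4 + r * b4) ∧
    pullB 1 0 r 1 (quart a0 a1 a2 a3 a4) (quart b0 b1 b2 b3 b4) =
      quart (b0 + b1 * r + b2 * r ^ 2 + b3 * r ^ 3 + b4 * r ^ 4)
        (b1 + 2 * b2 * r + 3 * b3 * r ^ 2 + 4 * b4 * r ^ 3)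
        (b2 + 3 * b3 * r + 6 * b4 * r ^ 2) (b3 + 4 * b4 * r) b4 := by
  constructor
  · apply p2_ext; intro u v
    rw [eval_pullA]; simp only [eval_quart]; ring
  · apply p2_ext; intro u v
    rw [eval_pullB]; simp only [eval_quart]; ring

lemma shear {a0 a1 a2 a3 a4 b0 b1 b2 b3 b4 : ℂ}
    (H : Hyp (quart a0 a1 a2 a3 a4) (quart b0 b1 b2 b3 b4)) (r : ℂ) :
    ∃ c0 c1 c2 c3 c4 d0 d1 d2 d3 d4 : ℂ, Hyp (quart c0 c1 c2 c3 c4) (quart d0 d1 d2 d3 d4) ∧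
      (Concl (quart c0 c1 c2 c3 c4) (quart d0 d1 d2 d3 d4) →
        Concl (quart a0 a1 a2 a3 a4) (quart b0 b1 b2 b3 b4)) ∧
      c3 = a3 + 4 * a4 * r + r * (b3 + 4 * b4 * r) ∧
      d0 = b0 + b1 * r + b2 * r ^ 2 + b3 * r ^ 3 + b4 * r ^ 4 ∧
      d1 = b1 + 2 * b2 * r + 3 * b3 * r ^ 2 + 4 * b4 * r ^ 3 ∧
      d2 = b2 + 3 * b3 * r + 6 * b4 * r ^ 2 ∧ d3 = b3 + 4 * b4 * r ∧ d4 = b4 ∧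
      (∀ t, dval c0 c1 c2 c3 c4 d0 d1 d2 d3 d4 1 t =
        dval a0 a1 a2 a3 a4 b0 b1 b2 b3 b4 1 (r + t)) := by
  have hd : (1 : ℂ) * 1 - 0 * r ≠ 0 := by simp
  have H' := hyp_pull hd H
  have hC := @concl_pull 1 0 r 1 hd (quart a0 a1 a2 a3 a4) (quart b0 b1 b2 b3 b4)
  have hD := fun t => eval_D_pull 1 0 r 1 1 t (quart a0 a1 a2 a3 a4) (quart b0 b1 b2 b3 b4)
  obtain ⟨e1, e2⟩ := pull_shear a0 a1 a2 a3 a4 b0 b1 b2 b3 b4 r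
  rw [e1, e2] at H' hC
  refine ⟨_, _, _, _, _, _, _, _, _, _, H', hC, rfl, rfl, rfl, rfl, rfl, rfl, ?_⟩
  intro t
  have := hD t
  rw [e1, e2, eval_D_quart] at this
  rw [this, eval_D_quart]
  simp

lemma swap {a0 a1 a2 a3 a4 b0 b1 b2 b3 b4 : ℂ}
    (H : Hyp (quart a0 a1 a2 a3 a4) (quart b0 b1 b2 b3 b4)) :
    Hyp (quart b4 b3 b2 b1 b0) (quart a4 a3 a2 a1 a0) ∧
      (Concl (quart b4 b3 b2 b1 b0) (quart a4 a3 a2 a1 a0) →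
        Concl (quart a0 a1 a2 a3 a4) (quart b0 b1 b2 b3 b4)) := by
  have hd : (0 : ℂ) * 0 - 1 * 1 ≠ 0 := by simp
  have H' := hyp_pull hd H
  have hC := @concl_pull 0 1 1 0 hd (quart a0 a1 a2 a3 a4) (quart b0 b1 b2 b3 b4)
  have e1 : pullA 0 1 1 0 (quart a0 a1 a2 a3 a4) (quart b0 b1 b2 b3 b4) =
      quart b4 b3 b2 b1 b0 := by
    apply p2_ext; intro u v
    rw [eval_pullA]; simp only [eval_quart]; ring
  have e2 : pullB 0 1 1 0 (quart a0 a1 a2 a3 a4) (quart b0 b1 b2 b3 b4) =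
      quart a4 a3 a2 a1 a0 := by
    apply p2_ext; intro u v
    rw [eval_pullB]; simp only [eval_quart]; ring
  rw [e1, e2] at H' hC
  exact ⟨H', hC⟩

/-- A double zero of `D(1,t)` can be moved to `t = 0`; then `y^3 ∣ A`. -/
lemma double_root {a0 a1 a2 a3 a4 b0 b1 b2 b3 b4 : ℂ}
    (H : Hyp (quart a0 a1 a2 a3 a4) (quart b0 b1 b2 b3 b4)) (r : ℂ)
    (h0 : (dpol a0 a1 a2 a3 a4 b0 b1 b2 b3 b4).eval r = 0)
    (h1 : (dpol a0 a1 a2 a3 a4 b0 b1 b2 b3 b4).derivative.eval r = 0) :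
    ∃ c3 c4 d0 d1 d2 d3 d4 : ℂ, Hyp (quart 0 0 0 c3 c4) (quart d0 d1 d2 d3 d4) ∧
      (Concl (quart 0 0 0 c3 c4) (quart d0 d1 d2 d3 d4) →
        Concl (quart a0 a1 a2 a3 a4) (quart b0 b1 b2 b3 b4)) ∧
      d0 = b0 + b1 * r + b2 * r ^ 2 + b3 * r ^ 3 + b4 * r ^ 4 ∧
      d1 = b1 + 2 * b2 * r + 3 * b3 * r ^ 2 + 4 * b4 * r ^ 3 ∧
      d2 = b2 + 3 * b3 * r + 6 * b4 * r ^ 2 ∧ d3 = b3 + 4 * b4 * r ∧ d4 = b4 := by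
  obtain ⟨c0, c1, c2, c3, c4, d0, d1, d2, d3, d4, H', hC, -, e0, e1, e2, e3, e4, hD⟩ := shear H r
  have hp : dpol c0 c1 c2 c3 c4 d0 d1 d2 d3 d4 =
      (dpol a0 a1 a2 a3 a4 b0 b1 b2 b3 b4).comp (Polynomial.C r + Polynomial.X) := by
    apply Polynomial.funext
    intro t
    simp [dpol_eval, hD]
  have k0 : (dpol c0 c1 c2 c3 c4 d0 d1 d2 d3 d4).eval 0 = 0 := by
    rw [hp]; simp [h0]
  have k1 : (dpol c0 c1 c2 c3 c4 d0 d1 d2 d3 d4).derivative.eval 0 = 0 := by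
    rw [hp]; simp [Polynomial.derivative_comp, h1]
  rw [dpol_eval] at k0
  have hc0 : c0 = 0 := by
    have := hypK H' 1 0 (by simp) k0
    simpa using this
  subst hc0
  have hd0 : d0 ≠ 0 := by
    intro h
    exact hypN H' 1 0 (by simp) (by simp) (by simp [h])
  have hc1 : c1 = 0 := by
    simpa [dval, hd0] using k0
  subst hc1
  have hc2 : c2 = 0 := by
    simpa [dpol, hd0] using k1
  subst hc2
  exact ⟨c3, c4, d0, d1, d2, d3, d4, H', hC, e0, e1, e2, e3, e4⟩

lemma sep_dvd {p g : Polynomial ℂ} (hp : p ≠ 0)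
    (h1 : ∀ r, p.eval r = 0 → p.derivative.eval r ≠ 0)
    (h2 : ∀ r, p.eval r = 0 → g.eval r = 0) : p ∣ g := by
  by_cases hg : g = 0
  · rw [hg]; exact dvd_zero p
  rw [IsAlgClosed.dvd_iff_roots_le_roots hp hg, Multiset.le_iff_subset]
  · intro r hr
    rw [Polynomial.mem_roots hg]
    exact h2 r ((Polynomial.mem_roots hp).mp hr)
  · rw [Multiset.nodup_iff_count_le_one]
    intro r
    rw [Polynomial.count_roots]
    by_contra! h
    have := (Polynomial.one_lt_rootMultiplicity_iff_isRoot hp).mp h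
    exact h1 r this.1 this.2

lemma linConj_of {A B A' B' : P2} (c1 c2 c3 c4 lam : ℂ) (hd : c1 * c4 - c2 * c3 ≠ 0)
    (hl : lam ≠ 0)
    (h1 : ∀ u v : ℂ, c1 * eval ![c1 * u + c2 * v, c3 * u + c4 * v] A +
      c3 * eval ![c1 * u + c2 * v, c3 * u + c4 * v] B = lam * eval ![u, v] A')
    (h2 : ∀ u v : ℂ, c2 * eval ![c1 * u + c2 * v, c3 * u + c4 * v] A +
      c4 * eval ![c1 * u + c2 * v, c3 * u + c4 * v] B = lam * eval ![u, v] B') :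
    LinConj A B A' B' := by
  refine ⟨c1, c2, c3, c4, lam, hd, hl, ?_, ?_⟩
  · apply p2_ext; intro u v
    simp only [map_add, map_mul, eval_C, eval_comp2]
    exact h1 u v
  · apply p2_ext; intro u v
    simp only [map_add, map_mul, eval_C, eval_comp2]
    exact h2 u v

/-- A univariate polynomial of degree at most six. -/
def upol (r0 r1 r2 r3 r4 r5 r6 : ℂ) : Polynomial ℂ :=
  Polynomial.C r6 * Polynomial.X ^ 6 + Polynomial.C r5 * Polynomial.X ^ 5
    + Polynomial.C r4 * Polynomial.X ^ 4 + Polynomial.C r3 * Polynomial.X ^ 3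
    + Polynomial.C r2 * Polynomial.X ^ 2 + Polynomial.C r1 * Polynomial.X + Polynomial.C r0

lemma upol_eval (r0 r1 r2 r3 r4 r5 r6 t : ℂ) : (upol r0 r1 r2 r3 r4 r5 r6).eval t =
    r6 * t ^ 6 + r5 * t ^ 5 + r4 * t ^ 4 + r3 * t ^ 3 + r2 * t ^ 2 + r1 * t + r0 := by
  simp [upol]

lemma upol_coeff (r0 r1 r2 r3 r4 r5 r6 : ℂ) :
    (upol r0 r1 r2 r3 r4 r5 r6).coeff 0 = r0 ∧ (upol r0 r1 r2 r3 r4 r5 r6).coeff 1 = r1 ∧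
    (upol r0 r1 r2 r3 r4 r5 r6).coeff 2 = r2 ∧ (upol r0 r1 r2 r3 r4 r5 r6).coeff 3 = r3 ∧
    (upol r0 r1 r2 r3 r4 r5 r6).coeff 4 = r4 ∧ (upol r0 r1 r2 r3 r4 r5 r6).coeff 5 = r5 ∧
    (upol r0 r1 r2 r3 r4 r5 r6).coeff 6 = r6 := by
  refine ⟨?_, ?_, ?_, ?_, ?_, ?_, ?_⟩ <;>
  simp [upol, Polynomial.coeff_X, Polynomial.coeff_C]

lemma dpol_eq (a0 a1 a2 a3 a4 b0 b1 b2 b3 b4 : ℂ) :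
    dpol a0 a1 a2 a3 a4 b0 b1 b2 b3 b4 =
      upol (4 * a0 * b1 - 4 * a1 * b0)
        (8 * a0 * b2 + 3 * a1 * b1 - 3 * a1 * b1 - 8 * a2 * b0)
        (12 * a0 * b3 + 6 * a1 * b2 + 2 * a2 * b1 - 2 * a1 * b2 - 6 * a2 * b1 - 12 * a3 * b0)
        (16 * a0 * b4 + 9 * a1 * b3 + 4 * a2 * b2 + a3 * b1
          - a1 * b3 - 4 * a2 * b2 - 9 * a3 * b1 - 16 * a4 * b0)
        (12 * a1 * b4 + 6 * a2 * b3 + 2 * a3 * b2 - 2 * a2 * b3 - 6 * a3 * b2 - 12 * a4 * b1)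
        (8 * a2 * b4 + 3 * a3 * b3 - 3 * a3 * b3 - 8 * a4 * b2)
        (4 * a3 * b4 - 4 * a4 * b3) := by
  apply Polynomial.funext
  intro t
  rw [dpol_eval, upol_eval, dval]
  ring

lemma dvd_zero_of_deg {p g : Polynomial ℂ} {n : ℕ} (hn : p.coeff n ≠ 0) (hg : g.natDegree < n)
    (h : p ∣ g) : g = 0 :=
  Polynomial.eq_zero_of_dvd_of_natDegree_lt h
    (lt_of_lt_of_le hg (Polynomial.le_natDegree_of_ne_zero hn))

lemma root_of_coeff {p : Polynomial ℂ} {n : ℕ} (hn : p.coeff n ≠ 0) (h : 0 < n) :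
    ∃ r, p.eval r = 0 := by
  apply IsAlgClosed.exists_root
  intro hdeg
  have h1 : p.natDegree = 0 := Polynomial.natDegree_eq_zero_iff_degree_le_zero.mpr hdeg.le
  have h2 := Polynomial.le_natDegree_of_ne_zero hn
  omega

lemma caseT' {a3 a4 c : ℂ} (H : Hyp (quart 0 0 0 a3 a4) (quart c 0 0 0 0)) :
    Concl (quart 0 0 0 a3 a4) (quart c 0 0 0 0) := by
  have ha4 : a4 ≠ 0 := by
    intro h
    exact hypN H 0 1 (by simp) (by simp [h]) (by simp)
  have hc : c ≠ 0 := by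
    intro h
    exact hypN H 1 0 (by simp) (by simp) (by simp [h])
  by_cases h3 : a3 = 0
  · subst h3
    obtain ⟨p, hp⟩ := IsAlgClosed.exists_pow_nat_eq (-a4 / c) (show 0 < 3 by norm_num)
    have hp' : c * p ^ 3 = -a4 := by rw [hp]; field_simp
    have hp0 : p ≠ 0 := by
      rintro rfl
      apply ha4; simpa using hp'
    left
    refine linConj_of p 0 0 1 (p * a4) (by simpa using hp0) (mul_ne_zero hp0 ha4) ?_ ?_
    · intro u v
      simp only [eval_quart, A1, map_pow, eval_X]
      simp
      ring
    · intro u v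
      simp only [eval_quart, B1, map_neg, map_pow, eval_X]
      simp
      linear_combination p * u ^ 4 * hp'
  · obtain ⟨r, hr⟩ : ∃ r : ℂ, a3 = -4 * a4 * r / 3 :=
      ⟨-3 * a3 / (4 * a4), by field_simp⟩
    subst hr
    have hr0 : r ≠ 0 := by
      rintro rfl
      apply h3; simp
    have hk := hypK H 1 r (by simp) (by rw [dval]; ring)
    have hc' : c = a4 * r ^ 3 / 3 := by
      apply mul_left_cancel₀ hr0
      linear_combination hk
    subst hc'
    right; right; left
    refine linConj_of 1 1 r 0 (a4 * r ^ 4 / 3) (by simpa using hr0) ?_ ?_ ?_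
    · exact div_ne_zero (mul_ne_zero ha4 (pow_ne_zero 4 hr0)) (by norm_num)
    · intro u v
      simp only [eval_quart, A3, map_add, map_mul, map_pow, eval_X, map_ofNat]
      simp
      ring
    · intro u v
      simp only [eval_quart, B3, map_neg, map_add, map_mul, map_pow, eval_X, map_ofNat]
      simp
      ring

lemma caseT {a0 a1 a2 a3 a4 c : ℂ} (H : Hyp (quart a0 a1 a2 a3 a4) (quart c 0 0 0 0)) :
    Concl (quart a0 a1 a2 a3 a4) (quart c 0 0 0 0) := by
  have ha4 : a4 ≠ 0 := by
    intro h
    exact hypN H 0 1 (by simp) (by simp [h]) (by simp)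
  obtain ⟨c0, c1, c2, c3, c4, d0, d1, d2, d3, d4, H', hC, e, e0, e1, e2, e3, e4, hD⟩ :=
    shear H (-a3 / (4 * a4))
  apply hC
  clear hC hD H
  have e' : c3 = 0 := by rw [e]; field_simp; ring
  clear e
  simp at e0 e1 e2 e3
  subst e' e1 e2 e3 e4
  clear e0 c ha4 a0 a1 a2 a3 a4
  have ha4 : c4 ≠ 0 := by
    intro h
    exact hypN H' 0 1 (by simp) (by simp [h]) (by simp)
  by_cases hdr : ∃ r, (dpol c0 c1 c2 0 c4 d0 0 0 0 0).eval r = 0 ∧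
      (dpol c0 c1 c2 0 c4 d0 0 0 0 0).derivative.eval r = 0
  · obtain ⟨r, hr0, hr1⟩ := hdr
    obtain ⟨f3, f4, g0, g1, g2, g3, g4, H2, hC, e0, e1, e2, e3, e4⟩ := double_root H' r hr0 hr1
    apply hC
    simp at e1 e2 e3
    subst e1 e2 e3 e4
    exact caseT' H2
  · push Not at hdr
    have hd0 : d0 ≠ 0 := by
      intro h
      obtain ⟨r, hr⟩ := root_of_coeff (p := upol c0 c1 c2 0 c4 0 0) (n := 4)
        (by rw [(upol_coeff _ _ _ _ _ _ _).2.2.2.2.1]; exact ha4) (by norm_num)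
      rw [upol_eval] at hr
      exact hypN H' 1 r (by simp) (by linear_combination hr) (by simp [h])
    have hcoef : (dpol c0 c1 c2 0 c4 d0 0 0 0 0).coeff 3 ≠ 0 := by
      rw [dpol_eq, (upol_coeff _ _ _ _ _ _ _).2.2.2.1]
      simp [ha4, hd0]
    have hdvd : dpol c0 c1 c2 0 c4 d0 0 0 0 0 ∣
        upol (4 * c0) (3 * c1 + 4 * d0) (2 * c2) 0 0 0 0 := by
      apply sep_dvd (by intro h; rw [h] at hcoef; simp at hcoef) hdr
      intro r hr
      rw [dpol_eval] at hr
      have hk := hypK H' 1 r (by simp) hr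
      rw [upol_eval]
      have hr' : 4 * c4 * r ^ 3 + 2 * c2 * r + c1 = 0 := by
        apply (mul_eq_zero.mp (_ : (-4 * d0) * _ = 0)).resolve_left (by simpa using hd0)
        rw [dval] at hr
        linear_combination hr
      linear_combination 4 * hk - r * hr'
    have hz := dvd_zero_of_deg hcoef
      (by unfold upol; simp only [Polynomial.C_0, zero_mul, zero_add]
          refine lt_of_le_of_lt (b := 2) ?_ (by norm_num)
          compute_degree) hdvd
    obtain ⟨k0, k1, k2, -⟩ := upol_coeff (4 * c0) (3 * c1 + 4 * d0) (2 * c2) 0 0 0 0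
    rw [hz, Polynomial.coeff_zero] at k0 k1 k2
    have z0 : c0 = 0 := by linear_combination -k0 / 4
    have z1 : c1 = -4 * d0 / 3 := by linear_combination -k1 / 3
    have z2 : c2 = 0 := by linear_combination -k2 / 2
    subst z0 z1 z2
    obtain ⟨k, hk⟩ := IsAlgClosed.exists_pow_nat_eq (d0 / (3 * c4)) (show 0 < 3 by norm_num)
    have hk' : d0 = 3 * c4 * k ^ 3 := by rw [hk]; field_simp
    have hk0 : k ≠ 0 := by
      rintro rfl
      apply hd0; simp [hk']
    subst hk'
    right; right; right; right
    refine linConj_of 1 0 k k (c4 * k ^ 4) (by simpa using hk0)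
      (mul_ne_zero ha4 (pow_ne_zero 4 hk0)) ?_ ?_
    · intro u v
      simp only [eval_quart, A5, map_add, map_mul, map_pow, eval_X, map_ofNat]
      simp
      ring
    · intro u v
      simp only [eval_quart, B5, map_mul, map_pow, eval_X, map_ofNat]
      simp
      ring

lemma caseV {α β γ δ : ℂ} (H : Hyp (quart 0 0 0 γ δ) (quart α β 0 0 0)) :
    Concl (quart 0 0 0 γ δ) (quart α β 0 0 0) := by
  have hδ : δ ≠ 0 := by
    intro h
    exact hypN H 0 1 (by simp) (by simp [h]) (by simp)
  have hα : α ≠ 0 := by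
    intro h
    exact hypN H 1 0 (by simp) (by simp) (by simp [h])
  by_cases hβ : β = 0
  · subst hβ; exact caseT' H
  by_cases hγ : γ = 0
  · subst hγ
    obtain ⟨H', hC⟩ := swap H
    exact hC (caseT' H')
  obtain ⟨r, s, hS, hP⟩ : ∃ r s : ℂ, 3 * β * δ * (r + s) = -(2 * β * γ + 4 * α * δ) ∧
      β * δ * (r * s) = α * γ := by
    obtain ⟨w, hw⟩ := IsAlgClosed.exists_eq_mul_self
      ((2 * β * γ + 4 * α * δ) ^ 2 - 4 * (3 * β * δ) * (3 * α * γ))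
    refine ⟨(-(2 * β * γ + 4 * α * δ) + w) / (2 * (3 * β * δ)),
      (-(2 * β * γ + 4 * α * δ) - w) / (2 * (3 * β * δ)), ?_, ?_⟩
    · field_simp; ring
    · field_simp
      linear_combination hw
  have hrs : r * s ≠ 0 := by
    intro h
    rw [h] at hP
    exact mul_ne_zero hα hγ (by linear_combination -hP)
  have hr0 : r ≠ 0 := left_ne_zero_of_mul hrs
  have hs0 : s ≠ 0 := right_ne_zero_of_mul hrs
  have hG : ∀ t : ℂ, t ≠ 0 → (t - r) * (t - s) = 0 →
      δ * t ^ 3 + γ * t ^ 2 + β * t + α = 0 := by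
    intro t ht hq
    have hk := hypK H 1 t (by simp) (by
      rw [dval]
      linear_combination -12 * β * δ * t ^ 2 * hq - 4 * t ^ 3 * hS + 12 * t ^ 2 * hP)
    apply mul_left_cancel₀ ht
    linear_combination hk
  have hGr := hG r hr0 (by ring)
  have hGs := hG s hs0 (by ring)
  by_cases hrs' : r = s
  · subst hrs'
    have h1 : (γ + δ * r) * (γ + 2 * δ * r) = 0 := by
      apply mul_left_cancel₀ hα
      linear_combination -(γ + 3 * δ * r) * hP + δ * r ^ 2 / 2 * hS
    rcases mul_eq_zero.mp h1 with h | h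
    · exfalso
      refine hypN H 1 r (by simp) (by linear_combination r ^ 3 * h) ?_
      have : α + β * r = 0 := by
        apply mul_left_cancel₀ (mul_ne_zero hδ hr0)
        linear_combination hP + α * h
      linear_combination this
    · have e1 : γ = -2 * δ * r := by linear_combination h
      subst e1
      have e2 : β * r = -2 * α := by
        apply mul_left_cancel₀ (mul_ne_zero hδ hr0)
        linear_combination hP
      have e3 : α = -δ * r ^ 3 := by linear_combination -hGr + e2
      subst e3
      have e4 : β = 2 * δ * r ^ 2 := by
        apply mul_left_cancel₀ hr0
        linear_combination e2
      subst e4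
      right; left
      refine linConj_of 1 0 0 r (-δ * r ^ 4) (by simpa using hr0)
        (mul_ne_zero (neg_ne_zero.mpr hδ) (pow_ne_zero 4 hr0)) ?_ ?_
      · intro u v
        simp only [eval_quart, A2, map_sub, map_mul, map_pow, eval_X, map_ofNat]
        simp
        ring
      · intro u v
        simp only [eval_quart, B2, map_sub, map_mul, map_pow, eval_X, map_ofNat]
        simp
        ring
  · have hsub : r - s ≠ 0 := sub_ne_zero.mpr hrs'
    obtain ⟨S, hSd⟩ : ∃ S, S = r + s := ⟨_, rfl⟩
    obtain ⟨P, hPd⟩ : ∃ P, P = r * s := ⟨_, rfl⟩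
    have E1 : δ * (S ^ 2 - P) + γ * S + β = 0 := by
      apply mul_left_cancel₀ hsub
      rw [hSd, hPd]
      linear_combination hGr - hGs
    have E2 : δ * P * S + γ * P - α = 0 := by
      apply mul_left_cancel₀ hsub
      rw [hSd, hPd]
      linear_combination s * hGr - r * hGs
    rw [← hSd] at hS
    rw [← hPd] at hP
    have I1 : γ * (δ * S + γ) = β * δ := by
      apply mul_left_cancel₀ hα
      linear_combination β * δ * E2 - (δ * S + γ) * hP
    have J1 : 3 * β ^ 2 * δ - β * γ ^ 2 + 4 * α * γ * δ = 0 := by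
      linear_combination -3 * β * I1 + γ * hS
    have J2 : 3 * γ ^ 2 * α - γ * β ^ 2 + 4 * α * β * δ = 0 := by
      linear_combination -3 * β * γ * E1 + 3 * β * S * I1 - 3 * γ * hP + β * hS
    obtain ⟨k, hk⟩ : ∃ k, γ = δ * k := ⟨γ / δ, by field_simp⟩
    subst hk
    have hk0 : k ≠ 0 := right_ne_zero_of_mul hγ
    have K1 : β ^ 3 = δ ^ 2 * k ^ 3 * α := by
      apply mul_left_cancel₀ (mul_ne_zero (by norm_num : (3 : ℂ) ≠ 0) hδ)
      linear_combination β * J1 - δ * k * J2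
    have K2 : (4 * β - δ * k ^ 2) * (β + δ * k ^ 2) = 0 := by
      apply mul_left_cancel₀ hβ
      linear_combination k ^ 2 * J1 + 4 * K1
    rcases mul_eq_zero.mp K2 with h | h
    · have e1 : β = δ * k ^ 2 / 4 := by linear_combination h / 4
      subst e1
      have e2 : α = δ * k ^ 3 / 64 := by
        apply mul_left_cancel₀ (mul_ne_zero (pow_ne_zero 2 hδ) (pow_ne_zero 3 hk0))
        linear_combination -K1
      subst e2
      right; right; right; left
      refine linConj_of 1 0 0 (k / 4) (δ * (k / 4) ^ 4) (by simpa using hk0)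
        (mul_ne_zero hδ (pow_ne_zero 4 (div_ne_zero hk0 (by norm_num)))) ?_ ?_
      · intro u v
        simp only [eval_quart, A4, map_add, map_mul, map_pow, eval_X, map_ofNat]
        simp
        ring
      · intro u v
        simp only [eval_quart, B4, map_add, map_mul, map_pow, eval_X, map_ofNat]
        simp
        ring
    · exfalso
      have e1 : β = -δ * k ^ 2 := by linear_combination h
      subst e1
      have e2 : α = -δ * k ^ 3 := by
        apply mul_left_cancel₀ (mul_ne_zero (pow_ne_zero 2 hδ) (pow_ne_zero 3 hk0))
        linear_combination -K1
      subst e2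
      exact hypN H 1 (-k) (by simp) (by ring) (by ring)

lemma caseS {a0 a1 a2 a3 a4 b0 b1 : ℂ} (H : Hyp (quart a0 a1 a2 a3 a4) (quart b0 b1 0 0 0)) :
    Concl (quart a0 a1 a2 a3 a4) (quart b0 b1 0 0 0) := by
  by_cases hb1 : b1 = 0
  · subst hb1; exact caseT H
  obtain ⟨c0, c1, c2, c3, c4, d0, d1, d2, d3, d4, H', hC, -, e0, e1, e2, e3, e4, hD⟩ :=
    shear H (-b0 / b1)
  apply hC
  clear hC hD H
  have e0' : d0 = 0 := by rw [e0]; field_simp; ring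
  clear e0
  simp at e1 e2 e3
  subst e0' e2 e3 e4
  rw [← e1] at hb1
  clear e1 b0 b1 a0 a1 a2 a3 a4
  have ha4 : c4 ≠ 0 := by
    intro h
    exact hypN H' 0 1 (by simp) (by simp [h]) (by simp)
  by_cases hdr : ∃ r, (dpol c0 c1 c2 c3 c4 0 d1 0 0 0).eval r = 0 ∧
      (dpol c0 c1 c2 c3 c4 0 d1 0 0 0).derivative.eval r = 0
  · obtain ⟨r, hr0, hr1⟩ := hdr
    obtain ⟨f3, f4, g0, g1, g2, g3, g4, H2, hC, e0, e1, e2, e3, e4⟩ := double_root H' r hr0 hr1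
    apply hC
    simp at e2 e3
    subst e2 e3 e4
    exact caseV H2
  · exfalso
    push Not at hdr
    have hcoef : (dpol c0 c1 c2 c3 c4 0 d1 0 0 0).coeff 4 ≠ 0 := by
      rw [dpol_eq, (upol_coeff _ _ _ _ _ _ _).2.2.2.2.1]
      simp [ha4, hb1]
    have hdvd : dpol c0 c1 c2 c3 c4 0 d1 0 0 0 ∣
        upol (16 * c0) (12 * c1) (8 * c2 + 12 * d1) (4 * c3) 0 0 0 := by
      apply sep_dvd (by intro h; rw [h] at hcoef; simp at hcoef) hdr
      intro r hr
      rw [dpol_eval] at hr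
      have hk := hypK H' 1 r (by simp) hr
      rw [upol_eval]
      apply mul_left_cancel₀ hb1
      rw [dval] at hr
      linear_combination 12 * d1 * hk + hr
    have hz := dvd_zero_of_deg hcoef
      (by unfold upol; simp only [Polynomial.C_0, zero_mul, zero_add]
          refine lt_of_le_of_lt (b := 3) ?_ (by norm_num)
          compute_degree) hdvd
    obtain ⟨k0, -⟩ := upol_coeff (16 * c0) (12 * c1) (8 * c2 + 12 * d1) (4 * c3) 0 0 0
    rw [hz, Polynomial.coeff_zero] at k0
    exact hypN H' 1 0 (by simp) (by linear_combination -k0 / 16) (by simp)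

lemma caseU {a0 a1 a2 a3 a4 b0 b1 b2 : ℂ}
    (H : Hyp (quart a0 a1 a2 a3 a4) (quart b0 b1 b2 0 0)) :
    Concl (quart a0 a1 a2 a3 a4) (quart b0 b1 b2 0 0) := by
  by_cases hb2 : b2 = 0
  · subst hb2; exact caseS H
  have ha4 : a4 ≠ 0 := by
    intro h
    exact hypN H 0 1 (by simp) (by simp [h]) (by simp)
  by_cases hdr : ∃ r, (dpol a0 a1 a2 a3 a4 b0 b1 b2 0 0).eval r = 0 ∧
      (dpol a0 a1 a2 a3 a4 b0 b1 b2 0 0).derivative.eval r = 0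
  · obtain ⟨r, hr0, hr1⟩ := hdr
    obtain ⟨f3, f4, g0, g1, g2, g3, g4, H2, hC, -⟩ := double_root H r hr0 hr1
    apply hC
    obtain ⟨H3, hC3⟩ := swap H2
    exact hC3 (caseS H3)
  · exfalso
    push Not at hdr
    have hcoef : (dpol a0 a1 a2 a3 a4 b0 b1 b2 0 0).coeff 5 ≠ 0 := by
      rw [dpol_eq, (upol_coeff _ _ _ _ _ _ _).2.2.2.2.2.1]
      simp [ha4, hb2]
    have hdvd : dpol a0 a1 a2 a3 a4 b0 b1 b2 0 0 ∣
        upol a0 (a1 + b0) (a2 + b1) (a3 + b2) a4 0 0 := by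
      apply sep_dvd (by intro h; rw [h] at hcoef; simp at hcoef) hdr
      intro r hr
      rw [dpol_eval] at hr
      have hk := hypK H 1 r (by simp) hr
      rw [upol_eval]
      linear_combination hk
    have hz := dvd_zero_of_deg hcoef
      (by unfold upol; simp only [Polynomial.C_0, zero_mul, zero_add]
          refine lt_of_le_of_lt (b := 4) ?_ (by norm_num)
          compute_degree) hdvd
    obtain ⟨-, -, -, -, k4, -⟩ := upol_coeff a0 (a1 + b0) (a2 + b1) (a3 + b2) a4 0 0
    rw [hz, Polynomial.coeff_zero] at k4
    exact ha4 k4.symm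

/-- If `(0 : 1)` is a zero of `D` the classification holds. -/
lemma case_root {a0 a1 a2 a3 a4 b0 b1 b2 b3 b4 : ℂ}
    (H : Hyp (quart a0 a1 a2 a3 a4) (quart b0 b1 b2 b3 b4))
    (h : dval a0 a1 a2 a3 a4 b0 b1 b2 b3 b4 0 1 = 0) :
    Concl (quart a0 a1 a2 a3 a4) (quart b0 b1 b2 b3 b4) := by
  have hb4 : b4 = 0 := by
    have := hypK H 0 1 (by simp) h
    simpa using this
  subst hb4
  have ha4 : a4 ≠ 0 := by
    intro h
    exact hypN H 0 1 (by simp) (by simp [h]) (by simp)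
  have hb3 : b3 = 0 := by
    simpa [dval, ha4] using h
  subst hb3
  exact caseU H

lemma case_all {a0 a1 a2 a3 a4 b0 b1 b2 b3 b4 : ℂ}
    (H : Hyp (quart a0 a1 a2 a3 a4) (quart b0 b1 b2 b3 b4)) :
    Concl (quart a0 a1 a2 a3 a4) (quart b0 b1 b2 b3 b4) := by
  by_cases h : dval a0 a1 a2 a3 a4 b0 b1 b2 b3 b4 0 1 = 0
  · exact case_root H h
  obtain ⟨r, hr⟩ := root_of_coeff (p := dpol a0 a1 a2 a3 a4 b0 b1 b2 b3 b4) (n := 6) (by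
    rw [dpol_eq, (upol_coeff _ _ _ _ _ _ _).2.2.2.2.2.2]
    intro h0; apply h; rw [dval]; linear_combination h0) (by norm_num)
  rw [dpol_eval] at hr
  obtain ⟨c0, c1, c2, c3, c4, d0, d1, d2, d3, d4, H', hC, -, -, -, -, -, -, hD⟩ := shear H r
  apply hC
  have h0 := hD 0
  rw [add_zero, hr] at h0
  obtain ⟨H2, hC2⟩ := swap H'
  apply hC2
  apply case_root H2
  rw [dval] at h0 ⊢
  linear_combination h0

/-- **Theorem A.** Every convex homogeneous foliation of degree four on `ℙ²(ℂ)` is linearly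
conjugate to one of the five foliations `ω₁, …, ω₅`. -/
theorem convex_homogeneous_degree_four_classification
    (A B : P2) (hA : A.IsHomogeneous 4) (hB : B.IsHomogeneous 4)
    (hcop : NoCommonFactor A B) (hconv : IsConvexPair A B) :
    LinConj A B A1 B1 ∨ LinConj A B A2 B2 ∨ LinConj A B A3 B3 ∨
      LinConj A B A4 B4 ∨ LinConj A B A5 B5 := by
  have H := hyp_of hA hB hcop hconv
  obtain ⟨a0, a1, a2, a3, a4, rfl⟩ := exists_quart hA
  obtain ⟨b0, b1, b2, b3, b4, rfl⟩ := exists_quart hB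
  exact case_all H
end
end

section
/- Set ω₁ = y⁴dx − x⁴dy, ω₂ = y³(2x−y)dx + x³(x−2y)dy, ω₃ = y²(6x²+4xy+y²)dx − x³(x+4y)dy, ω₄ = y³(4x+y)dx + x³(x+4y)dy, ω₅ = y²(6x²+4xy+y²)dx + 3x⁴dy. For all i ≠ j in {1,…,5}, ω_i and ω_j are not linearly conjugate: there exist no φ ∈ GL₂(ℂ) and λ ∈ ℂ∖{0} with φ*ω_i = λ ω_j. -/
open MvPolynomial

noncomputable section

/-- The five convex homogeneous 1-forms of degree four, as pairs of coefficients `(A, B)`. -/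
def omegas : Fin 5 → P2 × P2 := ![(A1, B1), (A2, B2), (A3, B3), (A4, B4), (A5, B5)]

set_option linter.unusedSimpArgs false


/-- Chain rule for `comp2`, derivative in `x`. -/
lemma pderiv_comp2_zero (a b c d : ℂ) (p : P2) :
    pderiv 0 (comp2 a b c d p) =
      C a * comp2 a b c d (pderiv 0 p) + C c * comp2 a b c d (pderiv 1 p) := by
  unfold comp2
  induction p using MvPolynomial.induction_on with
  | C r => simp [MvPolynomial.algebraMap_eq]
  | add p q hp hq => simp only [map_add, hp, hq]; ring
  | mul_X p i hp =>
    fin_cases i <;> simp [Derivation.leibniz, hp, pderiv_X, -aeval_eq_bind₁] <;> ring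

/-- Chain rule for `comp2`, derivative in `y`. -/
lemma pderiv_comp2_one (a b c d : ℂ) (p : P2) :
    pderiv 1 (comp2 a b c d p) =
      C b * comp2 a b c d (pderiv 0 p) + C d * comp2 a b c d (pderiv 1 p) := by
  unfold comp2
  induction p using MvPolynomial.induction_on with
  | C r => simp [MvPolynomial.algebraMap_eq]
  | add p q hp hq => simp only [map_add, hp, hq]; ring
  | mul_X p i hp =>
    fin_cases i <;> simp [Derivation.leibniz, hp, pderiv_X, -aeval_eq_bind₁] <;> ring

/-- The value of a polynomial at a point. -/
def ev (p : P2) (x y : ℂ) : ℂ := MvPolynomial.eval (![x, y] : Fin 2 → ℂ) p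

lemma ev_comp2 (a b c d : ℂ) (p : P2) (x y : ℂ) :
    ev (comp2 a b c d p) x y = ev p (a * x + b * y) (c * x + d * y) := by
  unfold ev comp2
  induction p using MvPolynomial.induction_on with
  | C r => simp [MvPolynomial.algebraMap_eq]
  | add p q hp hq => simp only [map_add, hp, hq]
  | mul_X p i hp =>
    fin_cases i <;> simp [hp, -aeval_eq_bind₁]

/-- Linear equivalence up to scaling of functions of two variables. -/
def SRel (f g : ℂ → ℂ → ℂ) : Prop :=
  ∃ a b c d k : ℂ, a * d - b * c ≠ 0 ∧ k ≠ 0 ∧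
    ∀ x y, f (a * x + b * y) (c * x + d * y) = k * g x y

lemma SRel.symm {f g : ℂ → ℂ → ℂ} (h : SRel f g) : SRel g f := by
  obtain ⟨a, b, c, d, k, hd, hk, h⟩ := h
  obtain ⟨t, ht⟩ : ∃ t, (a * d - b * c) * t = 1 := ⟨_, mul_inv_cancel₀ hd⟩
  refine ⟨d * t, -b * t, -c * t, a * t, k⁻¹, ?_, inv_ne_zero hk, ?_⟩
  · have : d * t * (a * t) - -b * t * (-c * t) = t := by linear_combination t * ht
    rw [this]
    exact right_ne_zero_of_mul_eq_one ht
  · intro x y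
    have := h (d * t * x + -b * t * y) (-c * t * x + a * t * y)
    have e1 : a * (d * t * x + -b * t * y) + b * (-c * t * x + a * t * y) = x := by
      linear_combination x * ht
    have e2 : c * (d * t * x + -b * t * y) + d * (-c * t * x + a * t * y) = y := by
      linear_combination y * ht
    rw [e1, e2] at this
    rw [this, inv_mul_cancel_left₀ hk]

/-- The inflection polynomial is a relative invariant. -/
lemma LinConj.rel {A B A' B' : P2} (h : LinConj A B A' B') :
    SRel (ev (Dpoly A B)) (ev (Dpoly A' B')) := by
  obtain ⟨a, b, c, d, k, hd, hk, h1, h2⟩ := h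
  refine ⟨a, b, c, d, k ^ 2 / (a * d - b * c) ^ 2, hd,
    div_ne_zero (pow_ne_zero 2 hk) (pow_ne_zero 2 hd), fun x y => ?_⟩
  have key : C (a * d - b * c) ^ 2 * comp2 a b c d (Dpoly A B) = C k ^ 2 * Dpoly A' B' := by
    have e : Dpoly (C k * A') (C k * B') = C k ^ 2 * Dpoly A' B' := by
      simp [Dpoly, Derivation.leibniz]; ring
    rw [← e, ← h1, ← h2]
    simp only [Dpoly, map_add, map_sub, map_mul, Derivation.leibniz, pderiv_C, smul_zero, add_zero,
      smul_eq_mul, pderiv_comp2_zero, pderiv_comp2_one]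
    simp only [comp2, map_sub, map_mul]
    ring
  have key2 := congrArg (fun p => ev p x y) key
  have := ev_comp2 a b c d (Dpoly A B) x y
  simp only [ev, map_mul, map_pow, eval_C] at key2 this ⊢
  rw [← this]
  field_simp
  linear_combination key2

lemma pderiv_two_P2 (i : Fin 2) : pderiv i (2 : P2) = 0 :=
  Derivation.map_natCast (pderiv i) 2

lemma pderiv_three_P2 (i : Fin 2) : pderiv i (3 : P2) = 0 :=
  Derivation.map_natCast (pderiv i) 3

lemma pderiv_four_P2 (i : Fin 2) : pderiv i (4 : P2) = 0 :=
  Derivation.map_natCast (pderiv i) 4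

lemma pderiv_six_P2 (i : Fin 2) : pderiv i (6 : P2) = 0 :=
  Derivation.map_natCast (pderiv i) 6

lemma ev1 : ev (Dpoly A1 B1) = fun x y => 16 * (x ^ 3 * y ^ 3) := by
  funext x y
  simp [ev, Dpoly, A1, B1, Derivation.leibniz, Derivation.leibniz_pow, pderiv_X,
    pderiv_two_P2, pderiv_three_P2, pderiv_four_P2, pderiv_six_P2]
  ring

lemma ev2 : ev (Dpoly A2 B2) = fun x y => -24 * (x ^ 2 * y ^ 2 * (x - y) ^ 2) := by
  funext x y
  simp [ev, Dpoly, A2, B2, Derivation.leibniz, Derivation.leibniz_pow, pderiv_X,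
    pderiv_two_P2, pderiv_three_P2, pderiv_four_P2, pderiv_six_P2]
  ring

lemma ev3 : ev (Dpoly A3 B3) = fun x y => 48 * (x ^ 2 * y * (x + y) ^ 3) := by
  funext x y
  simp [ev, Dpoly, A3, B3, Derivation.leibniz, Derivation.leibniz_pow, pderiv_X,
    pderiv_two_P2, pderiv_three_P2, pderiv_four_P2, pderiv_six_P2]
  ring

lemma ev4 : ev (Dpoly A4 B4) = fun x y => -48 * (x ^ 2 * y ^ 2 * (x ^ 2 + 3 * x * y + y ^ 2)) := by
  funext x y
  simp [ev, Dpoly, A4, B4, Derivation.leibniz, Derivation.leibniz_pow, pderiv_X,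
    pderiv_two_P2, pderiv_three_P2, pderiv_four_P2, pderiv_six_P2]
  ring

lemma ev5 : ev (Dpoly A5 B5) =
    fun x y => -48 * (x ^ 3 * y * (3 * x ^ 2 + 3 * x * y + y ^ 2)) := by
  funext x y
  simp [ev, Dpoly, A5, B5, Derivation.leibniz, Derivation.leibniz_pow, pderiv_X,
    pderiv_two_P2, pderiv_three_P2, pderiv_four_P2, pderiv_six_P2]
  ring

/-- A binary sextic vanishing identically has zero coefficients. -/
lemma coeffs (p0 p1 p2 p3 p4 p5 p6 : ℂ)
    (h : ∀ x y : ℂ, p0 * x ^ 6 + p1 * x ^ 5 * y + p2 * x ^ 4 * y ^ 2 + p3 * x ^ 3 * y ^ 3 +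
      p4 * x ^ 2 * y ^ 4 + p5 * x * y ^ 5 + p6 * y ^ 6 = 0) :
    p0 = 0 ∧ p1 = 0 ∧ p2 = 0 ∧ p3 = 0 ∧ p4 = 0 ∧ p5 = 0 ∧ p6 = 0 := by
  have h1 := h 1 0
  have h2 := h 0 1
  have h3 := h 1 1
  have h4 := h 1 (-1)
  have h5 := h 1 2
  have h6 := h 1 (-2)
  have h7 := h 1 3
  clear h
  norm_num at h1 h2 h3 h4 h5 h6 h7
  grind
set_option maxHeartbeats 4000000 in
/-- Coefficient comparison for the pullback of the inflection polynomial of the form 1. -/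
lemma cmp1 (a b c d q0 q1 q2 q3 q4 q5 q6 : ℂ)
    (h : ∀ x y : ℂ, (16) * ((a * x + b * y) ^ 3 * (c * x + d * y) ^ 3) =
      q0 * x ^ 6 + q1 * x ^ 5 * y + q2 * x ^ 4 * y ^ 2 + q3 * x ^ 3 * y ^ 3 +
      q4 * x ^ 2 * y ^ 4 + q5 * x * y ^ 5 + q6 * y ^ 6) :
    (16) * a ^ 3 * c ^ 3 = q0 ∧
    (48) * a ^ 3 * c ^ 2 * d + (48) * a ^ 2 * b * c ^ 3 = q1 ∧
    (48) * a ^ 3 * c * d ^ 2 + (144) * a ^ 2 * b * c ^ 2 * d + (48) * a * b ^ 2 * c ^ 3 = q2 ∧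
    (16) * a ^ 3 * d ^ 3 + (144) * a ^ 2 * b * c * d ^ 2 + (144) * a * b ^ 2 * c ^ 2 * d + (16)
      * b ^ 3 * c ^ 3 = q3 ∧
    (48) * a ^ 2 * b * d ^ 3 + (144) * a * b ^ 2 * c * d ^ 2 + (48) * b ^ 3 * c ^ 2 * d = q4 ∧
    (48) * a * b ^ 2 * d ^ 3 + (48) * b ^ 3 * c * d ^ 2 = q5 ∧
    (16) * b ^ 3 * d ^ 3 = q6 := by
  have := coeffs
    ((16) * a ^ 3 * c ^ 3 - q0)
    ((48) * a ^ 3 * c ^ 2 * d + (48) * a ^ 2 * b * c ^ 3 - q1)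
    ((48) * a ^ 3 * c * d ^ 2 + (144) * a ^ 2 * b * c ^ 2 * d + (48) * a * b ^ 2 * c ^ 3 - q2)
    ((16) * a ^ 3 * d ^ 3 + (144) * a ^ 2 * b * c * d ^ 2 + (144) * a * b ^ 2 * c ^ 2 * d +
      (16) * b ^ 3 * c ^ 3 - q3)
    ((48) * a ^ 2 * b * d ^ 3 + (144) * a * b ^ 2 * c * d ^ 2 + (48) * b ^ 3 * c ^ 2 * d - q4)
    ((48) * a * b ^ 2 * d ^ 3 + (48) * b ^ 3 * c * d ^ 2 - q5)
    ((16) * b ^ 3 * d ^ 3 - q6)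
    (fun x y => by linear_combination h x y)
  simpa only [sub_eq_zero] using this

set_option maxHeartbeats 4000000 in
/-- Coefficient comparison for the pullback of the inflection polynomial of the form 2. -/
lemma cmp2 (a b c d q0 q1 q2 q3 q4 q5 q6 : ℂ)
    (h : ∀ x y : ℂ, (-24) * ((a * x + b * y) ^ 2 * (c * x + d * y) ^ 2 * ((a * x + b * y) - (c * x + d * y)) ^ 2) =
      q0 * x ^ 6 + q1 * x ^ 5 * y + q2 * x ^ 4 * y ^ 2 + q3 * x ^ 3 * y ^ 3 +
      q4 * x ^ 2 * y ^ 4 + q5 * x * y ^ 5 + q6 * y ^ 6) :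
    (-24) * a ^ 4 * c ^ 2 + (48) * a ^ 3 * c ^ 3 + (-24) * a ^ 2 * c ^ 4 = q0 ∧
    (-48) * a ^ 4 * c * d + (-96) * a ^ 3 * b * c ^ 2 + (144) * a ^ 3 * c ^ 2 * d + (144) * a ^
      2 * b * c ^ 3 + (-96) * a ^ 2 * c ^ 3 * d + (-48) * a * b * c ^ 4 = q1 ∧
    (-24) * a ^ 4 * d ^ 2 + (-192) * a ^ 3 * b * c * d + (144) * a ^ 3 * c * d ^ 2 + (-144) * a
      ^ 2 * b ^ 2 * c ^ 2 + (432) * a ^ 2 * b * c ^ 2 * d + (-144) * a ^ 2 * c ^ 2 * d ^ 2 +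
      (144) * a * b ^ 2 * c ^ 3 + (-192) * a * b * c ^ 3 * d + (-24) * b ^ 2 * c ^ 4 = q2 ∧
    (-96) * a ^ 3 * b * d ^ 2 + (48) * a ^ 3 * d ^ 3 + (-288) * a ^ 2 * b ^ 2 * c * d + (432) *
      a ^ 2 * b * c * d ^ 2 + (-96) * a ^ 2 * c * d ^ 3 + (-96) * a * b ^ 3 * c ^ 2 + (432) * a
      * b ^ 2 * c ^ 2 * d + (-288) * a * b * c ^ 2 * d ^ 2 + (48) * b ^ 3 * c ^ 3 + (-96) * b ^
      2 * c ^ 3 * d = q3 ∧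
    (-144) * a ^ 2 * b ^ 2 * d ^ 2 + (144) * a ^ 2 * b * d ^ 3 + (-24) * a ^ 2 * d ^ 4 + (-192)
      * a * b ^ 3 * c * d + (432) * a * b ^ 2 * c * d ^ 2 + (-192) * a * b * c * d ^ 3 + (-24)
      * b ^ 4 * c ^ 2 + (144) * b ^ 3 * c ^ 2 * d + (-144) * b ^ 2 * c ^ 2 * d ^ 2 = q4 ∧
    (-96) * a * b ^ 3 * d ^ 2 + (144) * a * b ^ 2 * d ^ 3 + (-48) * a * b * d ^ 4 + (-48) * b ^
      4 * c * d + (144) * b ^ 3 * c * d ^ 2 + (-96) * b ^ 2 * c * d ^ 3 = q5 ∧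
    (-24) * b ^ 4 * d ^ 2 + (48) * b ^ 3 * d ^ 3 + (-24) * b ^ 2 * d ^ 4 = q6 := by
  have := coeffs
    ((-24) * a ^ 4 * c ^ 2 + (48) * a ^ 3 * c ^ 3 + (-24) * a ^ 2 * c ^ 4 - q0)
    ((-48) * a ^ 4 * c * d + (-96) * a ^ 3 * b * c ^ 2 + (144) * a ^ 3 * c ^ 2 * d + (144) * a
      ^ 2 * b * c ^ 3 + (-96) * a ^ 2 * c ^ 3 * d + (-48) * a * b * c ^ 4 - q1)
    ((-24) * a ^ 4 * d ^ 2 + (-192) * a ^ 3 * b * c * d + (144) * a ^ 3 * c * d ^ 2 + (-144) *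
      a ^ 2 * b ^ 2 * c ^ 2 + (432) * a ^ 2 * b * c ^ 2 * d + (-144) * a ^ 2 * c ^ 2 * d ^ 2 +
      (144) * a * b ^ 2 * c ^ 3 + (-192) * a * b * c ^ 3 * d + (-24) * b ^ 2 * c ^ 4 - q2)
    ((-96) * a ^ 3 * b * d ^ 2 + (48) * a ^ 3 * d ^ 3 + (-288) * a ^ 2 * b ^ 2 * c * d + (432)
      * a ^ 2 * b * c * d ^ 2 + (-96) * a ^ 2 * c * d ^ 3 + (-96) * a * b ^ 3 * c ^ 2 + (432) *
      a * b ^ 2 * c ^ 2 * d + (-288) * a * b * c ^ 2 * d ^ 2 + (48) * b ^ 3 * c ^ 3 + (-96) * b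
      ^ 2 * c ^ 3 * d - q3)
    ((-144) * a ^ 2 * b ^ 2 * d ^ 2 + (144) * a ^ 2 * b * d ^ 3 + (-24) * a ^ 2 * d ^ 4 +
      (-192) * a * b ^ 3 * c * d + (432) * a * b ^ 2 * c * d ^ 2 + (-192) * a * b * c * d ^ 3 +
      (-24) * b ^ 4 * c ^ 2 + (144) * b ^ 3 * c ^ 2 * d + (-144) * b ^ 2 * c ^ 2 * d ^ 2 - q4)
    ((-96) * a * b ^ 3 * d ^ 2 + (144) * a * b ^ 2 * d ^ 3 + (-48) * a * b * d ^ 4 + (-48) * b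
      ^ 4 * c * d + (144) * b ^ 3 * c * d ^ 2 + (-96) * b ^ 2 * c * d ^ 3 - q5)
    ((-24) * b ^ 4 * d ^ 2 + (48) * b ^ 3 * d ^ 3 + (-24) * b ^ 2 * d ^ 4 - q6)
    (fun x y => by linear_combination h x y)
  simpa only [sub_eq_zero] using this

set_option maxHeartbeats 4000000 in
/-- Coefficient comparison for the pullback of the inflection polynomial of the form 3. -/
lemma cmp3 (a b c d q0 q1 q2 q3 q4 q5 q6 : ℂ)
    (h : ∀ x y : ℂ, (48) * ((a * x + b * y) ^ 2 * (c * x + d * y) * ((a * x + b * y) + (c * x + d * y)) ^ 3) =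
      q0 * x ^ 6 + q1 * x ^ 5 * y + q2 * x ^ 4 * y ^ 2 + q3 * x ^ 3 * y ^ 3 +
      q4 * x ^ 2 * y ^ 4 + q5 * x * y ^ 5 + q6 * y ^ 6) :
    (48) * a ^ 5 * c + (144) * a ^ 4 * c ^ 2 + (144) * a ^ 3 * c ^ 3 + (48) * a ^ 2 * c ^ 4 =
      q0 ∧
    (48) * a ^ 5 * d + (240) * a ^ 4 * b * c + (288) * a ^ 4 * c * d + (576) * a ^ 3 * b * c ^
      2 + (432) * a ^ 3 * c ^ 2 * d + (432) * a ^ 2 * b * c ^ 3 + (192) * a ^ 2 * c ^ 3 * d +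
      (96) * a * b * c ^ 4 = q1 ∧
    (240) * a ^ 4 * b * d + (144) * a ^ 4 * d ^ 2 + (480) * a ^ 3 * b ^ 2 * c + (1152) * a ^ 3
      * b * c * d + (432) * a ^ 3 * c * d ^ 2 + (864) * a ^ 2 * b ^ 2 * c ^ 2 + (1296) * a ^ 2
      * b * c ^ 2 * d + (288) * a ^ 2 * c ^ 2 * d ^ 2 + (432) * a * b ^ 2 * c ^ 3 + (384) * a *
      b * c ^ 3 * d + (48) * b ^ 2 * c ^ 4 = q2 ∧
    (480) * a ^ 3 * b ^ 2 * d + (576) * a ^ 3 * b * d ^ 2 + (144) * a ^ 3 * d ^ 3 + (480) * a ^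
      2 * b ^ 3 * c + (1728) * a ^ 2 * b ^ 2 * c * d + (1296) * a ^ 2 * b * c * d ^ 2 + (192) *
      a ^ 2 * c * d ^ 3 + (576) * a * b ^ 3 * c ^ 2 + (1296) * a * b ^ 2 * c ^ 2 * d + (576) *
      a * b * c ^ 2 * d ^ 2 + (144) * b ^ 3 * c ^ 3 + (192) * b ^ 2 * c ^ 3 * d = q3 ∧
    (480) * a ^ 2 * b ^ 3 * d + (864) * a ^ 2 * b ^ 2 * d ^ 2 + (432) * a ^ 2 * b * d ^ 3 +
      (48) * a ^ 2 * d ^ 4 + (240) * a * b ^ 4 * c + (1152) * a * b ^ 3 * c * d + (1296) * a *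
      b ^ 2 * c * d ^ 2 + (384) * a * b * c * d ^ 3 + (144) * b ^ 4 * c ^ 2 + (432) * b ^ 3 * c
      ^ 2 * d + (288) * b ^ 2 * c ^ 2 * d ^ 2 = q4 ∧
    (240) * a * b ^ 4 * d + (576) * a * b ^ 3 * d ^ 2 + (432) * a * b ^ 2 * d ^ 3 + (96) * a *
      b * d ^ 4 + (48) * b ^ 5 * c + (288) * b ^ 4 * c * d + (432) * b ^ 3 * c * d ^ 2 + (192)
      * b ^ 2 * c * d ^ 3 = q5 ∧
    (48) * b ^ 5 * d + (144) * b ^ 4 * d ^ 2 + (144) * b ^ 3 * d ^ 3 + (48) * b ^ 2 * d ^ 4 =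
      q6 := by
  have := coeffs
    ((48) * a ^ 5 * c + (144) * a ^ 4 * c ^ 2 + (144) * a ^ 3 * c ^ 3 + (48) * a ^ 2 * c ^ 4 -
      q0)
    ((48) * a ^ 5 * d + (240) * a ^ 4 * b * c + (288) * a ^ 4 * c * d + (576) * a ^ 3 * b * c ^
      2 + (432) * a ^ 3 * c ^ 2 * d + (432) * a ^ 2 * b * c ^ 3 + (192) * a ^ 2 * c ^ 3 * d +
      (96) * a * b * c ^ 4 - q1)
    ((240) * a ^ 4 * b * d + (144) * a ^ 4 * d ^ 2 + (480) * a ^ 3 * b ^ 2 * c + (1152) * a ^ 3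
      * b * c * d + (432) * a ^ 3 * c * d ^ 2 + (864) * a ^ 2 * b ^ 2 * c ^ 2 + (1296) * a ^ 2
      * b * c ^ 2 * d + (288) * a ^ 2 * c ^ 2 * d ^ 2 + (432) * a * b ^ 2 * c ^ 3 + (384) * a *
      b * c ^ 3 * d + (48) * b ^ 2 * c ^ 4 - q2)
    ((480) * a ^ 3 * b ^ 2 * d + (576) * a ^ 3 * b * d ^ 2 + (144) * a ^ 3 * d ^ 3 + (480) * a
      ^ 2 * b ^ 3 * c + (1728) * a ^ 2 * b ^ 2 * c * d + (1296) * a ^ 2 * b * c * d ^ 2 + (192)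
      * a ^ 2 * c * d ^ 3 + (576) * a * b ^ 3 * c ^ 2 + (1296) * a * b ^ 2 * c ^ 2 * d + (576)
      * a * b * c ^ 2 * d ^ 2 + (144) * b ^ 3 * c ^ 3 + (192) * b ^ 2 * c ^ 3 * d - q3)
    ((480) * a ^ 2 * b ^ 3 * d + (864) * a ^ 2 * b ^ 2 * d ^ 2 + (432) * a ^ 2 * b * d ^ 3 +
      (48) * a ^ 2 * d ^ 4 + (240) * a * b ^ 4 * c + (1152) * a * b ^ 3 * c * d + (1296) * a *
      b ^ 2 * c * d ^ 2 + (384) * a * b * c * d ^ 3 + (144) * b ^ 4 * c ^ 2 + (432) * b ^ 3 * c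
      ^ 2 * d + (288) * b ^ 2 * c ^ 2 * d ^ 2 - q4)
    ((240) * a * b ^ 4 * d + (576) * a * b ^ 3 * d ^ 2 + (432) * a * b ^ 2 * d ^ 3 + (96) * a *
      b * d ^ 4 + (48) * b ^ 5 * c + (288) * b ^ 4 * c * d + (432) * b ^ 3 * c * d ^ 2 + (192)
      * b ^ 2 * c * d ^ 3 - q5)
    ((48) * b ^ 5 * d + (144) * b ^ 4 * d ^ 2 + (144) * b ^ 3 * d ^ 3 + (48) * b ^ 2 * d ^ 4 -
      q6)
    (fun x y => by linear_combination h x y)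
  simpa only [sub_eq_zero] using this

set_option maxHeartbeats 4000000 in
/-- Coefficient comparison for the pullback of the inflection polynomial of the form 4. -/
lemma cmp4 (a b c d q0 q1 q2 q3 q4 q5 q6 : ℂ)
    (h : ∀ x y : ℂ, (-48) * ((a * x + b * y) ^ 2 * (c * x + d * y) ^ 2 * ((a * x + b * y) ^ 2 + 3 * (a * x + b * y) * (c * x + d * y) + (c * x + d * y) ^ 2)) =
      q0 * x ^ 6 + q1 * x ^ 5 * y + q2 * x ^ 4 * y ^ 2 + q3 * x ^ 3 * y ^ 3 +
      q4 * x ^ 2 * y ^ 4 + q5 * x * y ^ 5 + q6 * y ^ 6) :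
    (-48) * a ^ 4 * c ^ 2 + (-144) * a ^ 3 * c ^ 3 + (-48) * a ^ 2 * c ^ 4 = q0 ∧
    (-96) * a ^ 4 * c * d + (-192) * a ^ 3 * b * c ^ 2 + (-432) * a ^ 3 * c ^ 2 * d + (-432) *
      a ^ 2 * b * c ^ 3 + (-192) * a ^ 2 * c ^ 3 * d + (-96) * a * b * c ^ 4 = q1 ∧
    (-48) * a ^ 4 * d ^ 2 + (-384) * a ^ 3 * b * c * d + (-432) * a ^ 3 * c * d ^ 2 + (-288) *
      a ^ 2 * b ^ 2 * c ^ 2 + (-1296) * a ^ 2 * b * c ^ 2 * d + (-288) * a ^ 2 * c ^ 2 * d ^ 2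
      + (-432) * a * b ^ 2 * c ^ 3 + (-384) * a * b * c ^ 3 * d + (-48) * b ^ 2 * c ^ 4 = q2 ∧
    (-192) * a ^ 3 * b * d ^ 2 + (-144) * a ^ 3 * d ^ 3 + (-576) * a ^ 2 * b ^ 2 * c * d +
      (-1296) * a ^ 2 * b * c * d ^ 2 + (-192) * a ^ 2 * c * d ^ 3 + (-192) * a * b ^ 3 * c ^ 2
      + (-1296) * a * b ^ 2 * c ^ 2 * d + (-576) * a * b * c ^ 2 * d ^ 2 + (-144) * b ^ 3 * c ^
      3 + (-192) * b ^ 2 * c ^ 3 * d = q3 ∧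
    (-288) * a ^ 2 * b ^ 2 * d ^ 2 + (-432) * a ^ 2 * b * d ^ 3 + (-48) * a ^ 2 * d ^ 4 +
      (-384) * a * b ^ 3 * c * d + (-1296) * a * b ^ 2 * c * d ^ 2 + (-384) * a * b * c * d ^ 3
      + (-48) * b ^ 4 * c ^ 2 + (-432) * b ^ 3 * c ^ 2 * d + (-288) * b ^ 2 * c ^ 2 * d ^ 2 =
      q4 ∧
    (-192) * a * b ^ 3 * d ^ 2 + (-432) * a * b ^ 2 * d ^ 3 + (-96) * a * b * d ^ 4 + (-96) * b
      ^ 4 * c * d + (-432) * b ^ 3 * c * d ^ 2 + (-192) * b ^ 2 * c * d ^ 3 = q5 ∧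
    (-48) * b ^ 4 * d ^ 2 + (-144) * b ^ 3 * d ^ 3 + (-48) * b ^ 2 * d ^ 4 = q6 := by
  have := coeffs
    ((-48) * a ^ 4 * c ^ 2 + (-144) * a ^ 3 * c ^ 3 + (-48) * a ^ 2 * c ^ 4 - q0)
    ((-96) * a ^ 4 * c * d + (-192) * a ^ 3 * b * c ^ 2 + (-432) * a ^ 3 * c ^ 2 * d + (-432) *
      a ^ 2 * b * c ^ 3 + (-192) * a ^ 2 * c ^ 3 * d + (-96) * a * b * c ^ 4 - q1)
    ((-48) * a ^ 4 * d ^ 2 + (-384) * a ^ 3 * b * c * d + (-432) * a ^ 3 * c * d ^ 2 + (-288) *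
      a ^ 2 * b ^ 2 * c ^ 2 + (-1296) * a ^ 2 * b * c ^ 2 * d + (-288) * a ^ 2 * c ^ 2 * d ^ 2
      + (-432) * a * b ^ 2 * c ^ 3 + (-384) * a * b * c ^ 3 * d + (-48) * b ^ 2 * c ^ 4 - q2)
    ((-192) * a ^ 3 * b * d ^ 2 + (-144) * a ^ 3 * d ^ 3 + (-576) * a ^ 2 * b ^ 2 * c * d +
      (-1296) * a ^ 2 * b * c * d ^ 2 + (-192) * a ^ 2 * c * d ^ 3 + (-192) * a * b ^ 3 * c ^ 2
      + (-1296) * a * b ^ 2 * c ^ 2 * d + (-576) * a * b * c ^ 2 * d ^ 2 + (-144) * b ^ 3 * c ^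
      3 + (-192) * b ^ 2 * c ^ 3 * d - q3)
    ((-288) * a ^ 2 * b ^ 2 * d ^ 2 + (-432) * a ^ 2 * b * d ^ 3 + (-48) * a ^ 2 * d ^ 4 +
      (-384) * a * b ^ 3 * c * d + (-1296) * a * b ^ 2 * c * d ^ 2 + (-384) * a * b * c * d ^ 3
      + (-48) * b ^ 4 * c ^ 2 + (-432) * b ^ 3 * c ^ 2 * d + (-288) * b ^ 2 * c ^ 2 * d ^ 2 -
      q4)
    ((-192) * a * b ^ 3 * d ^ 2 + (-432) * a * b ^ 2 * d ^ 3 + (-96) * a * b * d ^ 4 + (-96) *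
      b ^ 4 * c * d + (-432) * b ^ 3 * c * d ^ 2 + (-192) * b ^ 2 * c * d ^ 3 - q5)
    ((-48) * b ^ 4 * d ^ 2 + (-144) * b ^ 3 * d ^ 3 + (-48) * b ^ 2 * d ^ 4 - q6)
    (fun x y => by linear_combination h x y)
  simpa only [sub_eq_zero] using this

set_option maxHeartbeats 1000000 in
lemma not_rel_12 : ¬ SRel (ev (Dpoly A1 B1)) (ev (Dpoly A2 B2)) := by
  rw [ev1, ev2]
  rintro ⟨a, b, c, d, k, hd, hk, h⟩
  have ha := h 1 0
  have hb := h 0 1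
  obtain ⟨e0, e1, e2, e3, e4, e5, e6⟩ := cmp1 a b c d 0 0 (-24 * k) (48 * k) (-24 * k) 0 0
    (fun x y => by linear_combination h x y)
  have ha' : a = 0 ∨ c = 0 := by
    simp [or_assoc] at ha
    exact ha
  have hb' : b = 0 ∨ d = 0 := by
    simp [or_assoc] at hb
    exact hb
  clear h ha hb
  rcases ha' with rfl | rfl <;> rcases hb' with rfl | rfl <;>
    ring_nf at hd e0 e1 e2 e3 e4 e5 e6 <;> first | grind | (simp_all <;> grind)

set_option maxHeartbeats 1000000 in
lemma not_rel_13 : ¬ SRel (ev (Dpoly A1 B1)) (ev (Dpoly A3 B3)) := by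
  rw [ev1, ev3]
  rintro ⟨a, b, c, d, k, hd, hk, h⟩
  have ha := h 1 0
  have hb := h 0 1
  obtain ⟨e0, e1, e2, e3, e4, e5, e6⟩ := cmp1 a b c d 0 (48 * k) (144 * k) (144 * k) (48 * k) 0 0
    (fun x y => by linear_combination h x y)
  have ha' : a = 0 ∨ c = 0 := by
    simp [or_assoc] at ha
    exact ha
  have hb' : b = 0 ∨ d = 0 := by
    simp [or_assoc] at hb
    exact hb
  clear h ha hb
  rcases ha' with rfl | rfl <;> rcases hb' with rfl | rfl <;>
    ring_nf at hd e0 e1 e2 e3 e4 e5 e6 <;> first | grind | (simp_all <;> grind)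

set_option maxHeartbeats 1000000 in
lemma not_rel_14 : ¬ SRel (ev (Dpoly A1 B1)) (ev (Dpoly A4 B4)) := by
  rw [ev1, ev4]
  rintro ⟨a, b, c, d, k, hd, hk, h⟩
  have ha := h 1 0
  have hb := h 0 1
  obtain ⟨e0, e1, e2, e3, e4, e5, e6⟩ := cmp1 a b c d 0 0 (-48 * k) (-144 * k) (-48 * k) 0 0
    (fun x y => by linear_combination h x y)
  have ha' : a = 0 ∨ c = 0 := by
    simp [or_assoc] at ha
    exact ha
  have hb' : b = 0 ∨ d = 0 := by
    simp [or_assoc] at hb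
    exact hb
  clear h ha hb
  rcases ha' with rfl | rfl <;> rcases hb' with rfl | rfl <;>
    ring_nf at hd e0 e1 e2 e3 e4 e5 e6 <;> first | grind | (simp_all <;> grind)

set_option maxHeartbeats 1000000 in
lemma not_rel_15 : ¬ SRel (ev (Dpoly A1 B1)) (ev (Dpoly A5 B5)) := by
  rw [ev1, ev5]
  rintro ⟨a, b, c, d, k, hd, hk, h⟩
  have ha := h 1 0
  have hb := h 0 1
  obtain ⟨e0, e1, e2, e3, e4, e5, e6⟩ := cmp1 a b c d 0 (-144 * k) (-144 * k) (-48 * k) 0 0 0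
    (fun x y => by linear_combination h x y)
  have ha' : a = 0 ∨ c = 0 := by
    simp [or_assoc] at ha
    exact ha
  have hb' : b = 0 ∨ d = 0 := by
    simp [or_assoc] at hb
    exact hb
  clear h ha hb
  rcases ha' with rfl | rfl <;> rcases hb' with rfl | rfl <;>
    ring_nf at hd e0 e1 e2 e3 e4 e5 e6 <;> first | grind | (simp_all <;> grind)

set_option maxHeartbeats 1000000 in
lemma not_rel_23 : ¬ SRel (ev (Dpoly A2 B2)) (ev (Dpoly A3 B3)) := by
  rw [ev2, ev3]
  rintro ⟨a, b, c, d, k, hd, hk, h⟩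
  have ha := h 1 0
  have hb := h 0 1
  obtain ⟨e0, e1, e2, e3, e4, e5, e6⟩ := cmp2 a b c d 0 (48 * k) (144 * k) (144 * k) (48 * k) 0 0
    (fun x y => by linear_combination h x y)
  have ha' : a = 0 ∨ c = 0 ∨ a = c := by
    simp [or_assoc, sub_eq_zero] at ha
    exact ha
  have hb' : b = 0 ∨ d = 0 ∨ b = d := by
    simp [or_assoc, sub_eq_zero] at hb
    exact hb
  clear h ha hb
  rcases ha' with rfl | rfl | rfl <;> rcases hb' with rfl | rfl | rfl <;>
    ring_nf at hd e0 e1 e2 e3 e4 e5 e6 <;> first | grind | (simp_all <;> grind)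

set_option maxHeartbeats 1000000 in
lemma not_rel_24 : ¬ SRel (ev (Dpoly A2 B2)) (ev (Dpoly A4 B4)) := by
  rw [ev2, ev4]
  rintro ⟨a, b, c, d, k, hd, hk, h⟩
  have ha := h 1 0
  have hb := h 0 1
  obtain ⟨e0, e1, e2, e3, e4, e5, e6⟩ := cmp2 a b c d 0 0 (-48 * k) (-144 * k) (-48 * k) 0 0
    (fun x y => by linear_combination h x y)
  have ha' : a = 0 ∨ c = 0 ∨ a = c := by
    simp [or_assoc, sub_eq_zero] at ha
    exact ha
  have hb' : b = 0 ∨ d = 0 ∨ b = d := by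
    simp [or_assoc, sub_eq_zero] at hb
    exact hb
  clear h ha hb
  rcases ha' with rfl | rfl | rfl <;> rcases hb' with rfl | rfl | rfl <;>
    ring_nf at hd e0 e1 e2 e3 e4 e5 e6 <;> first | grind | (simp_all <;> grind)

set_option maxHeartbeats 1000000 in
lemma not_rel_25 : ¬ SRel (ev (Dpoly A2 B2)) (ev (Dpoly A5 B5)) := by
  rw [ev2, ev5]
  rintro ⟨a, b, c, d, k, hd, hk, h⟩
  have ha := h 1 0
  have hb := h 0 1
  obtain ⟨e0, e1, e2, e3, e4, e5, e6⟩ := cmp2 a b c d 0 (-144 * k) (-144 * k) (-48 * k) 0 0 0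
    (fun x y => by linear_combination h x y)
  have ha' : a = 0 ∨ c = 0 ∨ a = c := by
    simp [or_assoc, sub_eq_zero] at ha
    exact ha
  have hb' : b = 0 ∨ d = 0 ∨ b = d := by
    simp [or_assoc, sub_eq_zero] at hb
    exact hb
  clear h ha hb
  rcases ha' with rfl | rfl | rfl <;> rcases hb' with rfl | rfl | rfl <;>
    ring_nf at hd e0 e1 e2 e3 e4 e5 e6 <;> first | grind | (simp_all <;> grind)

set_option maxHeartbeats 1000000 in
lemma not_rel_34 : ¬ SRel (ev (Dpoly A3 B3)) (ev (Dpoly A4 B4)) := by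
  rw [ev3, ev4]
  rintro ⟨a, b, c, d, k, hd, hk, h⟩
  have ha := h 1 0
  have hb := h 0 1
  obtain ⟨e0, e1, e2, e3, e4, e5, e6⟩ := cmp3 a b c d 0 0 (-48 * k) (-144 * k) (-48 * k) 0 0
    (fun x y => by linear_combination h x y)
  have ha' : a = 0 ∨ c = 0 ∨ a = -c := by
    simp [or_assoc, add_eq_zero_iff_eq_neg] at ha
    exact ha
  have hb' : b = 0 ∨ d = 0 ∨ b = -d := by
    simp [or_assoc, add_eq_zero_iff_eq_neg] at hb
    exact hb
  clear h ha hb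
  rcases ha' with rfl | rfl | rfl <;> rcases hb' with rfl | rfl | rfl <;>
    ring_nf at hd e0 e1 e2 e3 e4 e5 e6 <;> first | grind | (simp_all <;> grind)

set_option maxHeartbeats 1000000 in
lemma not_rel_35 : ¬ SRel (ev (Dpoly A3 B3)) (ev (Dpoly A5 B5)) := by
  rw [ev3, ev5]
  rintro ⟨a, b, c, d, k, hd, hk, h⟩
  have ha := h 1 0
  have hb := h 0 1
  obtain ⟨e0, e1, e2, e3, e4, e5, e6⟩ := cmp3 a b c d 0 (-144 * k) (-144 * k) (-48 * k) 0 0 0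
    (fun x y => by linear_combination h x y)
  have ha' : a = 0 ∨ c = 0 ∨ a = -c := by
    simp [or_assoc, add_eq_zero_iff_eq_neg] at ha
    exact ha
  have hb' : b = 0 ∨ d = 0 ∨ b = -d := by
    simp [or_assoc, add_eq_zero_iff_eq_neg] at hb
    exact hb
  clear h ha hb
  rcases ha' with rfl | rfl | rfl <;> rcases hb' with rfl | rfl | rfl <;>
    ring_nf at hd e0 e1 e2 e3 e4 e5 e6 <;> first | grind | (simp_all <;> grind)

set_option maxHeartbeats 1000000 in
lemma not_rel_45 : ¬ SRel (ev (Dpoly A4 B4)) (ev (Dpoly A5 B5)) := by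
  rw [ev4, ev5]
  rintro ⟨a, b, c, d, k, hd, hk, h⟩
  obtain ⟨-, -, -, -, e4, e5, e6⟩ := cmp4 a b c d 0 (-144 * k) (-144 * k) (-48 * k) 0 0 0
    (fun x y => by linear_combination h x y)
  clear h
  by_cases hb : b = 0
  · subst hb
    have : a ^ 2 * d ^ 4 = 0 := by linear_combination (-1 / 48) * e4
    grind
  by_cases hd0 : d = 0
  · subst hd0
    have : b ^ 4 * c ^ 2 = 0 := by linear_combination (-1 / 48) * e4
    grind
  have hbd : b ^ 2 * d ^ 2 ≠ 0 := by simp [hb, hd0]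
  have q : b ^ 2 + 3 * b * d + d ^ 2 = 0 := by
    apply mul_left_cancel₀ hbd
    linear_combination (-1 / 48) * e6
  have r : a * (2 * b + 3 * d) + c * (3 * b + 2 * d) = 0 := by
    apply mul_left_cancel₀ hbd
    linear_combination (-1 / 48) * e5 - (2 * a * b * d ^ 2 + 2 * b ^ 2 * c * d) * q
  have s1 : 2 * b + 3 * d = 0 := by
    apply mul_left_cancel₀ hd
    linear_combination d * r - 2 * c * q
  have s2 : 3 * b + 2 * d = 0 := by
    apply mul_left_cancel₀ hd
    linear_combination -b * r + 2 * a * q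
  exact hb (by linear_combination (3 / 5) * s2 - (2 / 5) * s1)

lemma key (i j : Fin 5) (hij : i < j) :
    ¬ SRel (ev (Dpoly (omegas i).1 (omegas i).2)) (ev (Dpoly (omegas j).1 (omegas j).2)) :=
  match i, j, hij with
  | 0, 0, h => absurd h (by decide)
  | 0, 1, _ => not_rel_12
  | 0, 2, _ => not_rel_13
  | 0, 3, _ => not_rel_14
  | 0, 4, _ => not_rel_15
  | 1, 0, h => absurd h (by decide)
  | 1, 1, h => absurd h (by decide)
  | 1, 2, _ => not_rel_23
  | 1, 3, _ => not_rel_24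
  | 1, 4, _ => not_rel_25
  | 2, 0, h => absurd h (by decide)
  | 2, 1, h => absurd h (by decide)
  | 2, 2, h => absurd h (by decide)
  | 2, 3, _ => not_rel_34
  | 2, 4, _ => not_rel_35
  | 3, 0, h => absurd h (by decide)
  | 3, 1, h => absurd h (by decide)
  | 3, 2, h => absurd h (by decide)
  | 3, 3, h => absurd h (by decide)
  | 3, 4, _ => not_rel_45
  | 4, 0, h => absurd h (by decide)
  | 4, 1, h => absurd h (by decide)
  | 4, 2, h => absurd h (by decide)
  | 4, 3, h => absurd h (by decide)
  | 4, 4, h => absurd h (by decide)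

/-- The five foliations `ω₁, …, ω₅` are pairwise not linearly conjugate. -/
theorem omegas_pairwise_not_linConj :
    ∀ i j : Fin 5, i ≠ j →
      ¬ LinConj (omegas i).1 (omegas i).2 (omegas j).1 (omegas j).2 := by
  intro i j hij h
  rcases lt_or_gt_of_ne hij with hlt | hlt
  · exact key i j hlt h.rel
  · exact key j i hlt h.rel.symm
end
end

section
/- Set ω₁ = y⁴dx − x⁴dy, ω₂ = y³(2x−y)dx + x³(x−2y)dy, ω₃ = y²(6x²+4xy+y²)dx − x³(x+4y)dy, ω₄ = y³(4x+y)dx + x³(x+4y)dy, ω₅ = y²(6x²+4xy+y²)dx + 3x⁴dy, with coefficient pairs (A_i, B_i). Then each pair (A_i, B_i) is coprime, and the following polynomial identities hold: D₁ = 16x³y³ and C₁ = xy(y³−x³); D₂ = −24x²y²(x−y)² and C₂ = xy(x−y)(x²−xy+y²); D₃ = 48x²y(x+y)³ and C₃ = xy(x+y)(y²+3xy−x²); D₄ = −48x²y²(x²+3xy+y²) and C₄ = xy(x+y)(x²+3xy+y²); D₅ = −48x³y(3x²+3xy+y²) and C₅ = xy(x+y)(3x²+3xy+y²), where D_i = (∂A_i/∂x)(∂B_i/∂y)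 − (∂A_i/∂y)(∂B_i/∂x) and C_i = xA_i + yB_i. In particular, every linear factor of D_i divides C_i, so each ω_i defines a convex homogeneous foliation of degree 4; their types are respectively 2·R₃, 3·R₂, 1·R₁+1·R₂+1·R₃, 2·R₁+2·R₂, 3·R₁+1·R₃. -/
open MvPolynomial

noncomputable section

/-- Two polynomials are proportional (one is a constant multiple of the other). -/
def Proportional (l₁ l₂ : P2) : Prop := ∃ t : ℂ, l₁ = C t * l₂ ∨ l₂ = C t * l₁

/-- A convex homogeneous foliation given by `ω = A dx + B dy` has type
`Σₖ rₖ · Rₖ`, encoded by the list `ks` of the exponents `kᵢ`, if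
`D_ω = c · ∏ᵢ ℓᵢ^{kᵢ}` for some `c ≠ 0` and pairwise non-proportional linear forms `ℓᵢ`,
each dividing `C_ω`. -/
def HasType (A B : P2) (ks : List ℕ) : Prop :=
  ∃ c : ℂ, c ≠ 0 ∧ ∃ L : Fin ks.length → P2,
    (∀ i, (L i).IsHomogeneous 1 ∧ L i ≠ 0 ∧ L i ∣ Cpoly A B) ∧
    (∀ i j, i ≠ j → ¬ Proportional (L i) (L j)) ∧
    Dpoly A B = C c * ∏ i, (L i) ^ (ks.get i)


lemma X_relprime : IsRelPrime (X 0 : P2) (X 1) := by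
  have h0 : Prime (X 0 : P2) := X_prime
  rw [h0.irreducible.isRelPrime_iff_not_dvd]
  rw [X_dvd_X]
  simp

lemma isUnit_natCast_P2 {k : ℕ} (hk : k ≠ 0) : IsUnit (k : P2) := by
  have : (k : P2) = C (k : ℂ) := by simp
  rw [this]
  exact (IsUnit.mk0 (k : ℂ) (by exact_mod_cast hk)).map C

lemma ncf_of {A B : P2} (k m : ℕ) (hk : k ≠ 0) (hm : m ≠ 0) (u v w z : P2)
    (h1 : (k : P2) * X 0 ^ 7 = u * A + v * B) (h2 : (m : P2) * X 1 ^ 7 = w * A + z * B) :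
    NoCommonFactor A B := by
  intro p hA hB
  have e1 : p ∣ (k : P2) * X 0 ^ 7 :=
    h1 ▸ dvd_add (hA.mul_left _) (hB.mul_left _)
  have e2 : p ∣ (m : P2) * X 1 ^ 7 :=
    h2 ▸ dvd_add (hA.mul_left _) (hB.mul_left _)
  rw [(isUnit_natCast_P2 hk).dvd_mul_left] at e1
  rw [(isUnit_natCast_P2 hm).dvd_mul_left] at e2
  exact (IsRelPrime.pow X_relprime) e1 e2

lemma prime_of_linear {l : P2} (hl : l.IsHomogeneous 1) (h0 : l ≠ 0) : Prime l := by
  rw [← UniqueFactorizationMonoid.irreducible_iff_prime]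
  apply irreducible_of_totalDegree_eq_one (hl.totalDegree h0)
  intro x hx
  rw [isUnit_iff_ne_zero]
  rintro rfl
  apply h0
  ext i
  simpa using hx i

lemma convex_of {A B : P2} (k : ℕ) (hk : k ≠ 0) (E : P2)
    (h : Dpoly A B * E = (k : P2) * Cpoly A B ^ 3) : IsConvexPair A B := by
  intro l hl h0 hd
  have hp := prime_of_linear hl h0
  have e : l ∣ (k : P2) * Cpoly A B ^ 3 := h ▸ hd.mul_right _
  rw [(isUnit_natCast_P2 hk).dvd_mul_left] at e
  exact hp.dvd_of_dvd_pow e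

/-- The linear form `a x + b y`. -/
def lin (a b : ℂ) : P2 := C a * X 0 + C b * X 1

lemma lin_hom (a b : ℂ) : (lin a b).IsHomogeneous 1 :=
  ((isHomogeneous_X ℂ 0).C_mul a).add ((isHomogeneous_X ℂ 1).C_mul b)

lemma lin_eval_s2 (a b x y : ℂ) : eval ![x, y] (lin a b) = a * x + b * y := by
  simp [lin]

lemma lin_nonprop {a b c d : ℂ} (h : a * d - b * c ≠ 0) :
    ¬ Proportional (lin a b) (lin c d) := by
  rintro ⟨t, ht | ht⟩
  · have e0 := congrArg (eval ![1, 0]) ht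
    have e1 := congrArg (eval ![0, 1]) ht
    simp only [map_mul, lin_eval_s2, eval_C] at e0 e1
    apply h
    linear_combination d * e0 - c * e1
  · have e0 := congrArg (eval ![1, 0]) ht
    have e1 := congrArg (eval ![0, 1]) ht
    simp only [map_mul, lin_eval_s2, eval_C] at e0 e1
    apply h
    linear_combination a * e1 - b * e0

lemma lin_ne_s2 {a b : ℂ} (h : a ≠ 0 ∨ b ≠ 0) : lin a b ≠ 0 := by
  intro h0
  have e0 := congrArg (eval ![1, 0]) h0
  have e1 := congrArg (eval ![0, 1]) h0
  simp only [lin_eval_s2, map_zero] at e0 e1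
  rcases h with h | h
  · apply h; linear_combination e0
  · apply h; linear_combination e1

lemma hasType_of {A B : P2} {ks : List ℕ} (c : ℂ) (hc : c ≠ 0) (a b : Fin ks.length → ℂ)
    (h0 : ∀ i, a i ≠ 0 ∨ b i ≠ 0)
    (hC : ∀ i, lin (a i) (b i) ∣ Cpoly A B)
    (hn : ∀ i j, i < j → a i * b j - b i * a j ≠ 0)
    (hD : Dpoly A B = C c * ∏ i, (lin (a i) (b i)) ^ (ks.get i)) : HasType A B ks := by
  refine ⟨c, hc, fun i => lin (a i) (b i), fun i => ⟨lin_hom _ _, lin_ne_s2 (h0 i), hC i⟩, ?_, hD⟩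
  intro i j hij
  apply lin_nonprop
  rcases lt_or_gt_of_ne hij with h | h
  · exact hn i j h
  · intro e
    apply hn j i h
    linear_combination -e

lemma ncf1 : NoCommonFactor A1 B1 := by
  refine ncf_of 1 1 (by norm_num) (by norm_num) 0 (-X 0 ^ 3) (X 1 ^ 3) 0 ?_ ?_ <;>
  · simp only [A1, B1]
    push_cast
    ring

lemma ncf2 : NoCommonFactor A2 B2 := by
  refine ncf_of 3 3 (by norm_num) (by norm_num)
    ((16) * X 0 ^ 3 * X 1 ^ 0)
    ((-8) * X 0 ^ 0 * X 1 ^ 3 + (12) * X 0 ^ 1 * X 1 ^ 2 + (6) * X 0 ^ 2 * X 1 ^ 1 + (3) * X 0 ^ 3 * X 1 ^ 0)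
    ((-3) * X 0 ^ 0 * X 1 ^ 3 + (-6) * X 0 ^ 1 * X 1 ^ 2 + (-12) * X 0 ^ 2 * X 1 ^ 1 + (8) * X 0 ^ 3 * X 1 ^ 0)
    ((-16) * X 0 ^ 0 * X 1 ^ 3) ?_ ?_ <;>
  · simp only [A2, B2]
    push_cast
    ring

lemma ncf3 : NoCommonFactor A3 B3 := by
  refine ncf_of 81 81 (by norm_num) (by norm_num)
    ((256) * X 0 ^ 3 * X 1 ^ 0)
    ((64) * X 0 ^ 0 * X 1 ^ 3 + (240) * X 0 ^ 1 * X 1 ^ 2 + (324) * X 0 ^ 2 * X 1 ^ 1 + (-81) * X 0 ^ 3 * X 1 ^ 0)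
    ((81) * X 0 ^ 0 * X 1 ^ 3 + (-324) * X 0 ^ 1 * X 1 ^ 2 + (810) * X 0 ^ 2 * X 1 ^ 1 + (224) * X 0 ^ 3 * X 1 ^ 0)
    ((380) * X 0 ^ 0 * X 1 ^ 3 + (1344) * X 0 ^ 1 * X 1 ^ 2) ?_ ?_ <;>
  · simp only [A3, B3]
    push_cast
    ring

lemma ncf4 : NoCommonFactor A4 B4 := by
  refine ncf_of 15 15 (by norm_num) (by norm_num)
    ((-256) * X 0 ^ 3 * X 1 ^ 0)
    ((64) * X 0 ^ 0 * X 1 ^ 3 + (240) * X 0 ^ 1 * X 1 ^ 2 + (-60) * X 0 ^ 2 * X 1 ^ 1 + (15) * X 0 ^ 3 * X 1 ^ 0)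
    ((15) * X 0 ^ 0 * X 1 ^ 3 + (-60) * X 0 ^ 1 * X 1 ^ 2 + (240) * X 0 ^ 2 * X 1 ^ 1 + (64) * X 0 ^ 3 * X 1 ^ 0)
    ((-256) * X 0 ^ 0 * X 1 ^ 3) ?_ ?_ <;>
  · simp only [A4, B4]
    push_cast
    ring

lemma ncf5 : NoCommonFactor A5 B5 := by
  refine ncf_of 3 3 (by norm_num) (by norm_num)
    (0)
    ((1) * X 0 ^ 3 * X 1 ^ 0)
    ((3) * X 0 ^ 0 * X 1 ^ 3 + (-12) * X 0 ^ 1 * X 1 ^ 2 + (30) * X 0 ^ 2 * X 1 ^ 1 + (-48) * X 0 ^ 3 * X 1 ^ 0)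
    ((4) * X 0 ^ 0 * X 1 ^ 3 + (96) * X 0 ^ 1 * X 1 ^ 2) ?_ ?_ <;>
  · simp only [A5, B5]
    push_cast
    ring

lemma pderiv_ofNat_P2 (i : Fin 2) (n : ℕ) [n.AtLeastTwo] :
    pderiv i (ofNat(n) : P2) = 0 := by
  rw [← map_ofNat (C : ℂ →+* P2) n, pderiv_C]

set_option linter.unusedSimpArgs false

lemma D1_eq : Dpoly A1 B1 = 16 * X 0 ^ 3 * X 1 ^ 3 := by
  simp only [Dpoly, A1, B1, Derivation.leibniz, Derivation.leibniz_pow, map_add, map_sub,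
    map_neg, pderiv_X_self, pderiv_X_of_ne (show (0 : Fin 2) ≠ 1 by decide),
    pderiv_X_of_ne (show (1 : Fin 2) ≠ 0 by decide), pderiv_ofNat_P2, smul_eq_mul, nsmul_eq_mul]
  push_cast
  ring

lemma C1_eq : Cpoly A1 B1 = X 0 * X 1 * (X 1 ^ 3 - X 0 ^ 3) := by
  simp only [Cpoly, A1, B1]
  ring

lemma convex1 : IsConvexPair A1 B1 := by
  refine convex_of 16 (by norm_num) ((X 1 ^ 3 - X 0 ^ 3) ^ 3) ?_
  rw [D1_eq, C1_eq]
  push_cast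
  ring

lemma D2_eq : Dpoly A2 B2 = -24 * X 0 ^ 2 * X 1 ^ 2 * (X 0 - X 1) ^ 2 := by
  simp only [Dpoly, A2, B2, Derivation.leibniz, Derivation.leibniz_pow, map_add, map_sub,
    map_neg, pderiv_X_self, pderiv_X_of_ne (show (0 : Fin 2) ≠ 1 by decide),
    pderiv_X_of_ne (show (1 : Fin 2) ≠ 0 by decide), pderiv_ofNat_P2, smul_eq_mul, nsmul_eq_mul]
  push_cast
  ring

lemma C2_eq : Cpoly A2 B2 = X 0 * X 1 * (X 0 - X 1) * (X 0 ^ 2 - X 0 * X 1 + X 1 ^ 2) := by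
  simp only [Cpoly, A2, B2]
  ring

lemma convex2 : IsConvexPair A2 B2 := by
  refine convex_of 24 (by norm_num) (-(X 0 * X 1 * (X 0 - X 1) * (X 0 ^ 2 - X 0 * X 1 + X 1 ^ 2) ^ 3)) ?_
  rw [D2_eq, C2_eq]
  push_cast
  ring

lemma D3_eq : Dpoly A3 B3 = 48 * X 0 ^ 2 * X 1 * (X 0 + X 1) ^ 3 := by
  simp only [Dpoly, A3, B3, Derivation.leibniz, Derivation.leibniz_pow, map_add, map_sub,
    map_neg, pderiv_X_self, pderiv_X_of_ne (show (0 : Fin 2) ≠ 1 by decide),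
    pderiv_X_of_ne (show (1 : Fin 2) ≠ 0 by decide), pderiv_ofNat_P2, smul_eq_mul, nsmul_eq_mul]
  push_cast
  ring

lemma C3_eq : Cpoly A3 B3 = X 0 * X 1 * (X 0 + X 1) * (X 1 ^ 2 + 3 * X 0 * X 1 - X 0 ^ 2) := by
  simp only [Cpoly, A3, B3]
  ring

lemma convex3 : IsConvexPair A3 B3 := by
  refine convex_of 48 (by norm_num) (X 0 * X 1 ^ 2 * (X 1 ^ 2 + 3 * X 0 * X 1 - X 0 ^ 2) ^ 3) ?_
  rw [D3_eq, C3_eq]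
  push_cast
  ring

lemma D4_eq : Dpoly A4 B4 = -48 * X 0 ^ 2 * X 1 ^ 2 * (X 0 ^ 2 + 3 * X 0 * X 1 + X 1 ^ 2) := by
  simp only [Dpoly, A4, B4, Derivation.leibniz, Derivation.leibniz_pow, map_add, map_sub,
    map_neg, pderiv_X_self, pderiv_X_of_ne (show (0 : Fin 2) ≠ 1 by decide),
    pderiv_X_of_ne (show (1 : Fin 2) ≠ 0 by decide), pderiv_ofNat_P2, smul_eq_mul, nsmul_eq_mul]
  push_cast
  ring

lemma C4_eq : Cpoly A4 B4 = X 0 * X 1 * (X 0 + X 1) * (X 0 ^ 2 + 3 * X 0 * X 1 + X 1 ^ 2) := by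
  simp only [Cpoly, A4, B4]
  ring

lemma convex4 : IsConvexPair A4 B4 := by
  refine convex_of 48 (by norm_num) (-(X 0 * X 1 * (X 0 + X 1) ^ 3 * (X 0 ^ 2 + 3 * X 0 * X 1 + X 1 ^ 2) ^ 2)) ?_
  rw [D4_eq, C4_eq]
  push_cast
  ring

lemma D5_eq : Dpoly A5 B5 = -48 * X 0 ^ 3 * X 1 * (3 * X 0 ^ 2 + 3 * X 0 * X 1 + X 1 ^ 2) := by
  simp only [Dpoly, A5, B5, Derivation.leibniz, Derivation.leibniz_pow, map_add, map_sub,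
    map_neg, pderiv_X_self, pderiv_X_of_ne (show (0 : Fin 2) ≠ 1 by decide),
    pderiv_X_of_ne (show (1 : Fin 2) ≠ 0 by decide), pderiv_ofNat_P2, smul_eq_mul, nsmul_eq_mul]
  push_cast
  ring

lemma C5_eq : Cpoly A5 B5 = X 0 * X 1 * (X 0 + X 1) * (3 * X 0 ^ 2 + 3 * X 0 * X 1 + X 1 ^ 2) := by
  simp only [Cpoly, A5, B5]
  ring

lemma convex5 : IsConvexPair A5 B5 := by
  refine convex_of 48 (by norm_num) (-(X 1 ^ 2 * (X 0 + X 1) ^ 3 * (3 * X 0 ^ 2 + 3 * X 0 * X 1 + X 1 ^ 2) ^ 2)) ?_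
  rw [D5_eq, C5_eq]
  push_cast
  ring

lemma type1 : HasType A1 B1 [3, 3] := by
  refine hasType_of (16) (by norm_num) ![1, 0] ![0, 1] ?_ ?_ ?_ ?_
  · intro i
    fin_cases i <;> simp
  · rw [C1_eq]
    intro i
    fin_cases i
    · refine ⟨X 1 * (X 1 ^ 3 - X 0 ^ 3), ?_⟩
      simp [lin]
      ring
    · refine ⟨X 0 * (X 1 ^ 3 - X 0 ^ 3), ?_⟩
      simp [lin]
      ring
  · intro i j hij
    fin_cases i <;> fin_cases j <;> simp at hij ⊢
  · rw [D1_eq]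
    simp [Fin.prod_univ_succ, lin, show (C 16 : P2) = 16 from map_ofNat C 16]
    ring

lemma type2 : HasType A2 B2 [2, 2, 2] := by
  refine hasType_of (-24) (by norm_num) ![1, 0, 1] ![0, 1, -1] ?_ ?_ ?_ ?_
  · intro i
    fin_cases i <;> simp
  · rw [C2_eq]
    intro i
    fin_cases i
    · refine ⟨X 1 * (X 0 - X 1) * (X 0 ^ 2 - X 0 * X 1 + X 1 ^ 2), ?_⟩
      simp [lin]
      ring
    · refine ⟨X 0 * (X 0 - X 1) * (X 0 ^ 2 - X 0 * X 1 + X 1 ^ 2), ?_⟩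
      simp [lin]
      ring
    · refine ⟨X 0 * X 1 * (X 0 ^ 2 - X 0 * X 1 + X 1 ^ 2), ?_⟩
      simp [lin]
      ring
  · intro i j hij
    fin_cases i <;> fin_cases j <;> simp at hij ⊢
  · rw [D2_eq]
    simp [Fin.prod_univ_succ, lin, show (C 24 : P2) = 24 from map_ofNat C 24]
    ring

lemma type3 : HasType A3 B3 [1, 2, 3] := by
  refine hasType_of (48) (by norm_num) ![0, 1, 1] ![1, 0, 1] ?_ ?_ ?_ ?_
  · intro i
    fin_cases i <;> simp
  · rw [C3_eq]
    intro i
    fin_cases i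
    · refine ⟨X 0 * (X 0 + X 1) * (X 1 ^ 2 + 3 * X 0 * X 1 - X 0 ^ 2), ?_⟩
      simp [lin]
      ring
    · refine ⟨X 1 * (X 0 + X 1) * (X 1 ^ 2 + 3 * X 0 * X 1 - X 0 ^ 2), ?_⟩
      simp [lin]
      ring
    · refine ⟨X 0 * X 1 * (X 1 ^ 2 + 3 * X 0 * X 1 - X 0 ^ 2), ?_⟩
      simp [lin]
      ring
  · intro i j hij
    fin_cases i <;> fin_cases j <;> simp at hij ⊢
  · rw [D3_eq]
    simp [Fin.prod_univ_succ, lin, show (C 48 : P2) = 48 from map_ofNat C 48]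
    ring

lemma roots4 : ∃ a b : ℂ, a + b = 3 ∧ a * b = 1 ∧ a ≠ b := by
  obtain ⟨s, hs⟩ := IsAlgClosed.exists_pow_nat_eq (5 : ℂ) (n := 2) (by norm_num)
  refine ⟨(3 + s) / 2, (3 - s) / 2, by ring, by linear_combination -hs / 4, ?_⟩
  intro h
  have h0 : s = 0 := by linear_combination h
  rw [h0] at hs
  norm_num at hs

lemma roots5 : ∃ a b : ℂ, a + b = 1 ∧ a * b = 1 / 3 ∧ a ≠ b := by
  obtain ⟨s, hs⟩ := IsAlgClosed.exists_pow_nat_eq (-1 / 3 : ℂ) (n := 2) (by norm_num)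
  refine ⟨(1 + s) / 2, (1 - s) / 2, by ring, by linear_combination -hs / 4, ?_⟩
  intro h
  have h0 : s = 0 := by linear_combination h
  rw [h0] at hs
  norm_num at hs

lemma type4 : HasType A4 B4 [1, 1, 2, 2] := by
  obtain ⟨a, b, hs, hp, hne⟩ := roots4
  have ha : a ≠ 0 := by
    rintro rfl
    norm_num at hp
  have hb : b ≠ 0 := by
    rintro rfl
    norm_num at hp
  have hs' : (C a : P2) + C b = 3 := by rw [← C_add, hs]; exact map_ofNat C 3
  have hp' : (C a : P2) * C b = 1 := by rw [← C_mul, hp]; simp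
  refine hasType_of (-48) (by norm_num) ![1, 1, 1, 0] ![a, b, 0, 1] ?_ ?_ ?_ ?_
  · intro i
    fin_cases i <;> simp
  · rw [C4_eq]
    intro i
    fin_cases i
    · refine ⟨X 0 * X 1 * (X 0 + X 1) * lin 1 b, ?_⟩
      simp [lin]
      linear_combination X 0 * X 1 * (X 0 + X 1) * (-X 0 * X 1 * hs' - X 1 ^ 2 * hp')
    · refine ⟨X 0 * X 1 * (X 0 + X 1) * lin 1 a, ?_⟩
      simp [lin]
      linear_combination X 0 * X 1 * (X 0 + X 1) * (-X 0 * X 1 * hs' - X 1 ^ 2 * hp')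
    · refine ⟨X 1 * (X 0 + X 1) * (X 0 ^ 2 + 3 * X 0 * X 1 + X 1 ^ 2), ?_⟩
      simp [lin]
      ring
    · refine ⟨X 0 * (X 0 + X 1) * (X 0 ^ 2 + 3 * X 0 * X 1 + X 1 ^ 2), ?_⟩
      simp [lin]
      ring
  · intro i j hij
    fin_cases i <;> fin_cases j <;> simp [ha, hb] at hij ⊢
    intro h
    exact hne (by linear_combination -h)
  · rw [D4_eq]
    simp [Fin.prod_univ_succ, lin, show (C 48 : P2) = 48 from map_ofNat C 48]
    linear_combination 48 * X 0 ^ 2 * X 1 ^ 2 * (-X 0 * X 1 * hs' - X 1 ^ 2 * hp')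

lemma type5 : HasType A5 B5 [1, 1, 1, 3] := by
  obtain ⟨a, b, hs, hp, hne⟩ := roots5
  have ha : a ≠ 0 := by
    rintro rfl
    norm_num at hp
  have hb : b ≠ 0 := by
    rintro rfl
    norm_num at hp
  have hs' : (C a : P2) + C b = 1 := by rw [← C_add, hs]; simp
  have hp' : 3 * ((C a : P2) * C b) = 1 := by
    rw [← C_mul, hp, ← map_ofNat (C : ℂ →+* P2) 3, ← C_mul]
    norm_num
  refine hasType_of (-144) (by norm_num) ![1, 1, 0, 1] ![a, b, 1, 0] ?_ ?_ ?_ ?_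
  · intro i
    fin_cases i <;> simp
  · rw [C5_eq]
    intro i
    fin_cases i
    · refine ⟨3 * X 0 * X 1 * (X 0 + X 1) * lin 1 b, ?_⟩
      simp [lin]
      linear_combination X 0 * X 1 * (X 0 + X 1) * (-3 * X 0 * X 1 * hs' - X 1 ^ 2 * hp')
    · refine ⟨3 * X 0 * X 1 * (X 0 + X 1) * lin 1 a, ?_⟩
      simp [lin]
      linear_combination X 0 * X 1 * (X 0 + X 1) * (-3 * X 0 * X 1 * hs' - X 1 ^ 2 * hp')
    · refine ⟨X 0 * (X 0 + X 1) * (3 * X 0 ^ 2 + 3 * X 0 * X 1 + X 1 ^ 2), ?_⟩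
      simp [lin]
      ring
    · refine ⟨X 1 * (X 0 + X 1) * (3 * X 0 ^ 2 + 3 * X 0 * X 1 + X 1 ^ 2), ?_⟩
      simp [lin]
      ring
  · intro i j hij
    fin_cases i <;> fin_cases j <;> simp [ha, hb] at hij ⊢
    intro h
    exact hne (by linear_combination -h)
  · rw [D5_eq]
    simp [Fin.prod_univ_succ, lin, show (C 144 : P2) = 144 from map_ofNat C 144]
    linear_combination 48 * X 0 ^ 3 * X 1 * (-3 * X 0 * X 1 * hs' - X 1 ^ 2 * hp')

/-- Each of the five pairs `(Aᵢ, Bᵢ)` is coprime; the stated identities for `Dᵢ` and `Cᵢ`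
hold; in particular every linear factor of `Dᵢ` divides `Cᵢ`, so each `ωᵢ` defines a convex
homogeneous foliation of degree 4, of respective types
`2·R₃`, `3·R₂`, `1·R₁+1·R₂+1·R₃`, `2·R₁+2·R₂`, `3·R₁+1·R₃`. -/
theorem omegas_identities_and_types :
    (NoCommonFactor A1 B1 ∧
      Dpoly A1 B1 = 16 * X 0 ^ 3 * X 1 ^ 3 ∧
      Cpoly A1 B1 = X 0 * X 1 * (X 1 ^ 3 - X 0 ^ 3) ∧
      IsConvexPair A1 B1 ∧ HasType A1 B1 [3, 3]) ∧
    (NoCommonFactor A2 B2 ∧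
      Dpoly A2 B2 = -24 * X 0 ^ 2 * X 1 ^ 2 * (X 0 - X 1) ^ 2 ∧
      Cpoly A2 B2 = X 0 * X 1 * (X 0 - X 1) * (X 0 ^ 2 - X 0 * X 1 + X 1 ^ 2) ∧
      IsConvexPair A2 B2 ∧ HasType A2 B2 [2, 2, 2]) ∧
    (NoCommonFactor A3 B3 ∧
      Dpoly A3 B3 = 48 * X 0 ^ 2 * X 1 * (X 0 + X 1) ^ 3 ∧
      Cpoly A3 B3 = X 0 * X 1 * (X 0 + X 1) * (X 1 ^ 2 + 3 * X 0 * X 1 - X 0 ^ 2) ∧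
      IsConvexPair A3 B3 ∧ HasType A3 B3 [1, 2, 3]) ∧
    (NoCommonFactor A4 B4 ∧
      Dpoly A4 B4 = -48 * X 0 ^ 2 * X 1 ^ 2 * (X 0 ^ 2 + 3 * X 0 * X 1 + X 1 ^ 2) ∧
      Cpoly A4 B4 = X 0 * X 1 * (X 0 + X 1) * (X 0 ^ 2 + 3 * X 0 * X 1 + X 1 ^ 2) ∧
      IsConvexPair A4 B4 ∧ HasType A4 B4 [1, 1, 2, 2]) ∧
    (NoCommonFactor A5 B5 ∧
      Dpoly A5 B5 = -48 * X 0 ^ 3 * X 1 * (3 * X 0 ^ 2 + 3 * X 0 * X 1 + X 1 ^ 2) ∧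
      Cpoly A5 B5 = X 0 * X 1 * (X 0 + X 1) * (3 * X 0 ^ 2 + 3 * X 0 * X 1 + X 1 ^ 2) ∧
      IsConvexPair A5 B5 ∧ HasType A5 B5 [1, 1, 1, 3]) := by
  exact ⟨⟨ncf1, D1_eq, C1_eq, convex1, type1⟩,
    ⟨ncf2, D2_eq, C2_eq, convex2, type2⟩,
    ⟨ncf3, D3_eq, C3_eq, convex3, type3⟩,
    ⟨ncf4, D4_eq, C4_eq, convex4, type4⟩,
    ⟨ncf5, D5_eq, C5_eq, convex5, type5⟩⟩
end
end
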